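/- arXiv:1003.5388 — 4 statements merged into one kernel-verified Lean document; each statement's English description precedes it below -/
import Mathlib

section
/- Let f : ℕ → ℤ be a multiplicative function taking values in {-1, 1} such that f(2^k) = 1 for some integer k ≥ 1. Then there exists σ₀ ∈ (0, 1) such that: (i) for every real σ > σ₀ the infinite product Π(σ) = ∏_p (1 + ∑_{k ≥ 2} (f(p^k) - f(p^{k-1}) f(p))/p^{kσ}) over primes p converges absolutely and each factor is strictly positive (so Π(σ) > 0); and (ii) for every real σ > 1, ∑_{n ≥ 1} f(n)/n^σ = Π(σ) · ∏_p (1 - f(p)/p^σ)^{-1}. -/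
/-- The `p`-th factor `1 + ∑_{k ≥ 2} (f (p^k) - f (p^(k-1)) f p) / p^(kσ)` of the
product `Π(σ)`. -/
noncomputable def piFactor (f : ℕ → ℤ) (p : ℕ) (σ : ℝ) : ℝ :=
  1 + ∑' k : ℕ, ((f (p ^ (k + 2)) : ℝ) - (f (p ^ (k + 1)) : ℝ) * (f p : ℝ))
      / (p : ℝ) ^ (((k : ℝ) + 2) * σ)

/-!
Put `x = p ^ (-σ)` and `a k = f (p ^ k)`. Multiplying the Euler factor `∑ a k x ^ k` by
`1 - a 1 x` kills its linear term, and what is left is the `p`-th factor of `Π(σ)`; this is the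
factorization for `σ > 1`. That factor is `1 + O(p ^ (-2σ))`, so the product converges for
`σ > 1/2`, and it has the sign of `∑ a k x ^ k`. Since `a 0 = 1` and `a k ≥ -1`, this sum is at
least `2 - 1 / (1 - x)`, which is positive for `x < 1/2`; this covers the primes `p ≥ 3` when
`3 ^ (-σ) < 1/2`. For `p = 2` the threshold `x = 1/2` is reached at `σ = 1`, and the term
`(a m + 1) x ^ m` with `a m ≠ -1` pushes it strictly beyond `1/2`, i.e. to some `σ₀ < 1`.
-/

open Set
open scoped Topology

section PowerSeries

theorem one_add_tsum_mul_pow_eq_one_sub_mul_tsum {R : Type*} [CommRing R] [TopologicalSpace R]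
    [IsTopologicalRing R] [T2Space R] {a : ℕ → R} {x : R} (ha0 : a 0 = 1)
    (hs : Summable fun k => a k * x ^ k) :
    1 + ∑' k, (a (k + 2) - a (k + 1) * a 1) * x ^ (k + 2) =
      (1 - a 1 * x) * ∑' k, a k * x ^ k := by
  have hs1 : Summable fun k => a (k + 1) * x ^ (k + 1) :=
    (summable_nat_add_iff (f := fun k => a k * x ^ k) 1).2 hs
  have hs2 : Summable fun k => a (k + 2) * x ^ (k + 2) :=
    (summable_nat_add_iff (f := fun k => a k * x ^ k) 2).2 hs
  have split0 : ∑' k, a k * x ^ k = 1 + ∑' k, a (k + 1) * x ^ (k + 1) := by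
    simpa [ha0] using hs.tsum_eq_zero_add
  have split1 : ∑' k, a (k + 1) * x ^ (k + 1) = a 1 * x + ∑' k, a (k + 2) * x ^ (k + 2) := by
    simpa using hs1.tsum_eq_zero_add
  have split_sub : ∑' k, (a (k + 2) - a (k + 1) * a 1) * x ^ (k + 2) =
      ∑' k, a (k + 2) * x ^ (k + 2) - a 1 * x * ∑' k, a (k + 1) * x ^ (k + 1) := by
    rw [← hs1.tsum_mul_left, ← hs2.tsum_sub (hs1.mul_left _)]
    exact tsum_congr fun k => by ring
  linear_combination split_sub - (1 - a 1 * x) * split0 - split1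

theorem summable_mul_pow_of_norm_le_one {R : Type*} [NormedRing R] [NormOneClass R]
    [CompleteSpace R] {a : ℕ → R} {x : R} (ha : ∀ k, ‖a k‖ ≤ 1) (hx : ‖x‖ < 1) :
    Summable fun k => a k * x ^ k := by
  refine .of_norm_bounded (summable_geometric_of_lt_one (norm_nonneg x) hx) fun k => ?_
  calc ‖a k * x ^ k‖ ≤ ‖a k‖ * ‖x ^ k‖ := norm_mul_le _ _
    _ ≤ 1 * ‖x‖ ^ k := by gcongr; exacts [ha k, norm_pow_le x k]
    _ = ‖x‖ ^ k := one_mul _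

theorem norm_tsum_sub_mul_pow_le {R : Type*} [NormedRing R] [NormOneClass R] {a : ℕ → R} {x : R}
    (ha : ∀ k, ‖a k‖ ≤ 1) (hx : ‖x‖ < 1) :
    ‖∑' k, (a (k + 2) - a (k + 1) * a 1) * x ^ (k + 2)‖ ≤ 2 * ‖x‖ ^ 2 * (1 - ‖x‖)⁻¹ := by
  refine tsum_of_norm_bounded
    ((hasSum_geometric_of_lt_one (norm_nonneg x) hx).mul_left (2 * ‖x‖ ^ 2)) fun k => ?_
  have coeff_le : ‖a (k + 2) - a (k + 1) * a 1‖ ≤ 2 :=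
    calc ‖a (k + 2) - a (k + 1) * a 1‖ ≤ ‖a (k + 2)‖ + ‖a (k + 1)‖ * ‖a 1‖ :=
          (norm_sub_le _ _).trans (by gcongr; exact norm_mul_le _ _)
      _ ≤ 1 + 1 * 1 := by gcongr <;> exact ha _
      _ = 2 := by norm_num
  calc ‖(a (k + 2) - a (k + 1) * a 1) * x ^ (k + 2)‖
      ≤ ‖a (k + 2) - a (k + 1) * a 1‖ * ‖x ^ (k + 2)‖ := norm_mul_le _ _
    _ ≤ 2 * ‖x‖ ^ (k + 2) := by gcongr; exact norm_pow_le x _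
    _ = 2 * ‖x‖ ^ 2 * ‖x‖ ^ k := by ring

variable {a : ℕ → ℝ} {x : ℝ}

theorem sum_add_one_mul_pow_le_tsum_add (ha : ∀ k, |a k| ≤ 1) (hx0 : 0 ≤ x) (hx1 : x < 1)
    (s : Finset ℕ) :
    ∑ k ∈ s, (a k + 1) * x ^ k ≤ ∑' k, a k * x ^ k + (1 - x)⁻¹ := by
  have hs : Summable fun k => a k * x ^ k :=
    summable_mul_pow_of_norm_le_one ha (by rwa [Real.norm_of_nonneg hx0])
  have hsum : HasSum (fun k => (a k + 1) * x ^ k) (∑' k, a k * x ^ k + (1 - x)⁻¹) := by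
    simpa only [add_mul, one_mul] using hs.hasSum.add (hasSum_geometric_of_lt_one hx0 hx1)
  refine sum_le_hasSum s (fun k _ => mul_nonneg ?_ (pow_nonneg hx0 k)) hsum
  linarith [neg_le_of_abs_le (ha k)]

theorem tsum_mul_pow_pos_of_lt_half (ha0 : a 0 = 1) (ha : ∀ k, |a k| ≤ 1)
    (hx0 : 0 ≤ x) (hx : x < 1 / 2) : 0 < ∑' k, a k * x ^ k := by
  have hle : 2 ≤ ∑' k, a k * x ^ k + (1 - x)⁻¹ := by
    simpa [ha0, one_add_one_eq_two] using
      sum_add_one_mul_pow_le_tsum_add ha hx0 (by linarith) {0}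
  have hlt : (1 - x)⁻¹ < 2 := inv_lt_of_inv_lt₀ two_pos (by linarith)
  linarith

theorem exists_half_lt_forall_tsum_mul_pow_pos (ha0 : a 0 = 1) (ha : ∀ k, |a k| ≤ 1)
    {m : ℕ} (hm : m ≠ 0) (ham : a m ≠ -1) :
    ∃ r ∈ Ioc (1 / 2 : ℝ) 1, ∀ x ∈ Ico 0 r, 0 < ∑' k, a k * x ^ k := by
  have ham_pos : 0 < a m + 1 := by
    linarith [lt_of_le_of_ne (neg_le_of_abs_le (ha m)) ham.symm]
  have hnear : ∀ᶠ x in 𝓝 (1 / 2 : ℝ), (1 - x)⁻¹ < 2 + (a m + 1) * x ^ m := by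
    have hcont : ContinuousAt (fun x : ℝ => (1 - x)⁻¹) (1 / 2) :=
      ContinuousAt.inv₀ (by fun_prop) (by norm_num)
    refine hcont.eventually_lt (by fun_prop) ?_
    have : 0 < (a m + 1) * (1 / 2) ^ m := by positivity
    linarith [show (1 - 1 / 2 : ℝ)⁻¹ = 2 by norm_num]
  obtain ⟨u, hu, hsub⟩ := mem_nhdsGE_iff_exists_Ico_subset.1 (nhdsWithin_le_nhds hnear)
  refine ⟨min u 1, ⟨lt_min hu (by norm_num), min_le_right _ _⟩, fun x ⟨hx0, hxr⟩ => ?_⟩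
  obtain ⟨hxu, hx1⟩ := lt_min_iff.1 hxr
  rcases lt_or_ge x (1 / 2) with hx | hx
  · exact tsum_mul_pow_pos_of_lt_half ha0 ha hx0 hx
  · have hle : 2 + (a m + 1) * x ^ m ≤ ∑' k, a k * x ^ k + (1 - x)⁻¹ := by
      simpa [Finset.sum_pair hm.symm, ha0, one_add_one_eq_two] using
        sum_add_one_mul_pow_le_tsum_add ha hx0 hx1 {0, m}
    have hlt : (1 - x)⁻¹ < 2 + (a m + 1) * x ^ m := hsub ⟨hx, hxu⟩
    linarith

end PowerSeries

theorem rpow_neg_lt_rpow_neg {b c s σ : ℝ} (hb : 1 < b) (hbc : b ≤ c) (hσ : 0 ≤ σ)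
    (hsσ : s < σ) : c ^ (-σ) < b ^ (-s) :=
  calc c ^ (-σ) ≤ b ^ (-σ) :=
        Real.rpow_le_rpow_of_nonpos (zero_lt_one.trans hb) hbc (neg_nonpos.2 hσ)
    _ < b ^ (-s) := Real.rpow_lt_rpow_of_exponent_lt hb (neg_lt_neg hsσ)

theorem abs_div_rpow_le_rpow_neg {c y σ : ℝ} (hc : |c| ≤ 1) (hy : 0 ≤ y) :
    |c / y ^ σ| ≤ y ^ (-σ) := by
  have hpow : 0 ≤ y ^ σ := Real.rpow_nonneg hy σ
  rw [abs_div, abs_of_nonneg hpow, Real.rpow_neg hy, div_eq_mul_inv]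
  exact mul_le_of_le_one_left (inv_nonneg.2 hpow) hc

theorem eventually_rpow_neg_lt {b c : ℝ} (hb : 0 < b) (hbc : b⁻¹ < c) :
    ∀ᶠ s in 𝓝 (1 : ℝ), b ^ (-s) < c := by
  have hcont : ContinuousAt (fun s : ℝ => b ^ (-s)) 1 :=
    continuousAt_const.rpow continuousAt_neg (.inl hb.ne')
  exact hcont.eventually_lt continuousAt_const (by rwa [Real.rpow_neg_one])

theorem tprod_pos_of_summable_abs_sub_one {ι : Type*} {u : ι → ℝ} (hu : ∀ i, 0 < u i)
    (hs : Summable fun i => |u i - 1|) : 0 < ∏' i, u i := by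
  have hlog : Summable fun i => Real.log (u i) := by
    simpa only [add_sub_cancel] using Real.summable_log_one_add_of_summable hs.of_abs
  rw [← Real.rexp_tsum_eq_tprod hu hlog]
  exact Real.exp_pos _

/-- The quotient of the `p`-th Euler factor of `f` by `(1 - f p / p ^ σ)⁻¹`, in expanded form.
This is `piFactor` for functions that need not be integer-valued. -/
noncomputable def eulerQuotientFactor (f : ℕ → ℝ) (p : ℕ) (σ : ℝ) : ℝ :=
  1 + ∑' k : ℕ, (f (p ^ (k + 2)) - f (p ^ (k + 1)) * f p) / (p : ℝ) ^ (((k : ℝ) + 2) * σ)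

namespace eulerQuotientFactor

variable {f : ℕ → ℝ} {p : ℕ} {σ : ℝ}

theorem eq_one_add_tsum_pow (f : ℕ → ℝ) (p : ℕ) (σ : ℝ) :
    eulerQuotientFactor f p σ =
      1 + ∑' k : ℕ, (f (p ^ (k + 2)) - f (p ^ (k + 1)) * f (p ^ 1)) *
        ((p : ℝ) ^ (-σ)) ^ (k + 2) := by
  have hpow (k : ℕ) : ((p : ℝ) ^ (-σ)) ^ (k + 2) = ((p : ℝ) ^ (((k : ℝ) + 2) * σ))⁻¹ := by
    rw [Real.rpow_neg p.cast_nonneg, inv_pow, ← Real.rpow_mul_natCast p.cast_nonneg]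
    push_cast
    rw [mul_comm σ]
  simp only [eulerQuotientFactor, hpow, pow_one, div_eq_mul_inv]

theorem eq_one_sub_mul_tsum (hp : 1 < p) (hσ : 0 < σ) (hf1 : f 1 = 1)
    (hf : ∀ k, |f (p ^ k)| ≤ 1) :
    eulerQuotientFactor f p σ =
      (1 - f p / (p : ℝ) ^ σ) * ∑' k, f (p ^ k) * ((p : ℝ) ^ (-σ)) ^ k := by
  have hx1 : ‖(p : ℝ) ^ (-σ)‖ < 1 := by
    rw [Real.norm_of_nonneg (by positivity)]
    exact Real.rpow_lt_one_of_one_lt_of_neg (mod_cast hp) (neg_neg_of_pos hσ)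
  rw [eq_one_add_tsum_pow, one_add_tsum_mul_pow_eq_one_sub_mul_tsum (a := fun k => f (p ^ k))
    (by simpa using hf1) (summable_mul_pow_of_norm_le_one hf hx1), pow_one,
    Real.rpow_neg p.cast_nonneg, div_eq_mul_inv]

theorem abs_sub_one_le (hp : 1 < p) (hσ : 0 < σ) (hf : ∀ k, |f (p ^ k)| ≤ 1) :
    |eulerQuotientFactor f p σ - 1| ≤ 2 * ((p : ℝ) ^ (-σ)) ^ 2 * (1 - (p : ℝ) ^ (-σ))⁻¹ := by
  have hx : ‖(p : ℝ) ^ (-σ)‖ = (p : ℝ) ^ (-σ) := Real.norm_of_nonneg (by positivity)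
  have hx1 : (p : ℝ) ^ (-σ) < 1 :=
    Real.rpow_lt_one_of_one_lt_of_neg (mod_cast hp) (neg_neg_of_pos hσ)
  rw [eq_one_add_tsum_pow, add_sub_cancel_left]
  simpa only [hx, ← Real.norm_eq_abs] using
    norm_tsum_sub_mul_pow_le (a := fun k => f (p ^ k)) hf (hx.trans_lt hx1)

theorem pos_of_tsum_pos (hp : 1 < p) (hσ : 0 < σ) (hf1 : f 1 = 1) (hf : ∀ k, |f (p ^ k)| ≤ 1)
    (hpos : 0 < ∑' k, f (p ^ k) * ((p : ℝ) ^ (-σ)) ^ k) : 0 < eulerQuotientFactor f p σ := by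
  rw [eq_one_sub_mul_tsum hp hσ hf1 hf]
  have hpσ : 1 < (p : ℝ) ^ σ := Real.one_lt_rpow (mod_cast hp) hσ
  have hfp : f p ≤ 1 := by simpa using (abs_le.1 (hf 1)).2
  have hlt : f p / (p : ℝ) ^ σ < 1 := (div_lt_one (by positivity)).2 (hfp.trans_lt hpσ)
  exact mul_pos (sub_pos.2 hlt) hpos

theorem summable_abs_sub_one (hσ : 1 / 2 < σ) (hf : ∀ n, n ≠ 0 → |f n| ≤ 1) :
    Summable fun p : Nat.Primes => |eulerQuotientFactor f p σ - 1| := by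
  have hσ0 : 0 < σ := one_half_pos.trans hσ
  have hmajorant : Summable fun p : Nat.Primes =>
      2 * ((p : ℕ) : ℝ) ^ (-(2 * σ)) * (1 - (2 : ℝ) ^ (-σ))⁻¹ :=
    ((Nat.Primes.summable_rpow.2 (by linarith)).mul_left 2).mul_right _
  refine hmajorant.of_nonneg_of_le (fun _ => abs_nonneg _) fun p => ?_
  have hp2 : (2 : ℝ) ≤ (p : ℕ) := mod_cast p.2.two_le
  have hx2 : (2 : ℝ) ^ (-σ) < 1 :=
    Real.rpow_lt_one_of_one_lt_of_neg one_lt_two (neg_neg_of_pos hσ0)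
  have hxp : ((p : ℕ) : ℝ) ^ (-σ) ≤ (2 : ℝ) ^ (-σ) :=
    Real.rpow_le_rpow_of_nonpos two_pos hp2 (neg_nonpos.2 hσ0.le)
  have hsq : (((p : ℕ) : ℝ) ^ (-σ)) ^ 2 = ((p : ℕ) : ℝ) ^ (-(2 * σ)) := by
    rw [← Real.rpow_mul_natCast (p : ℕ).cast_nonneg]
    congr 1
    push_cast
    ring
  calc |eulerQuotientFactor f p σ - 1|
      ≤ 2 * (((p : ℕ) : ℝ) ^ (-σ)) ^ 2 * (1 - ((p : ℕ) : ℝ) ^ (-σ))⁻¹ :=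
        abs_sub_one_le p.2.one_lt hσ0 fun k => hf _ (pow_ne_zero k p.2.ne_zero)
    _ ≤ 2 * ((p : ℕ) : ℝ) ^ (-(2 * σ)) * (1 - (2 : ℝ) ^ (-σ))⁻¹ := by
        rw [hsq]
        have := sub_pos.2 hx2
        gcongr

theorem multipliable (hσ : 1 / 2 < σ) (hf : ∀ n, n ≠ 0 → |f n| ≤ 1) :
    Multipliable fun p : Nat.Primes => eulerQuotientFactor f p σ := by
  simpa only [add_sub_cancel] using
    Real.multipliable_one_add_of_summable (summable_abs_sub_one hσ hf).of_abs

theorem exists_lt_one_forall_pos (hf1 : f 1 = 1) (hf : ∀ n, n ≠ 0 → |f n| ≤ 1)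
    (hf2 : ∃ k, k ≠ 0 ∧ f (2 ^ k) ≠ -1) :
    ∃ σ₀ ∈ Ioo (1 / 2 : ℝ) 1, ∀ σ > σ₀, ∀ p : ℕ, p.Prime → 0 < eulerQuotientFactor f p σ := by
  obtain ⟨m, hm, hfm⟩ := hf2
  have hf_pow {p : ℕ} (hp : p.Prime) (k : ℕ) : |f (p ^ k)| ≤ 1 := hf _ (pow_ne_zero k hp.ne_zero)
  obtain ⟨r, ⟨hr, -⟩, hpos⟩ := exists_half_lt_forall_tsum_mul_pow_pos
    (a := fun k => f (2 ^ k)) (by simpa using hf1) (hf_pow Nat.prime_two) hm hfm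
  have near2 : ∀ᶠ s in 𝓝 (1 : ℝ), (2 : ℝ) ^ (-s) < r :=
    eventually_rpow_neg_lt two_pos ((one_div (2 : ℝ)).symm.trans_lt hr)
  have near3 : ∀ᶠ s in 𝓝 (1 : ℝ), (3 : ℝ) ^ (-s) < 1 / 2 :=
    eventually_rpow_neg_lt three_pos (by norm_num)
  have hIoo : ∀ᶠ s in 𝓝[<] (1 : ℝ), s ∈ Ioo (1 / 2) 1 := Ioo_mem_nhdsLT (by norm_num)
  obtain ⟨s, hs, hs2, hs3⟩ := (hIoo.and (nhdsWithin_le_nhds (near2.and near3))).exists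
  refine ⟨s, hs, fun σ hσ p hp => ?_⟩
  have hσ0 : 0 < σ := (one_half_pos.trans hs.1).trans hσ
  refine pos_of_tsum_pos hp.one_lt hσ0 hf1 (hf_pow hp) ?_
  rcases hp.two_le.eq_or_lt with rfl | hp3
  · exact hpos _ ⟨by positivity, (rpow_neg_lt_rpow_neg one_lt_two le_rfl hσ0.le hσ).trans hs2⟩
  · have hp3 : (3 : ℝ) ≤ p := mod_cast hp3
    exact tsum_mul_pow_pos_of_lt_half (a := fun k => f (p ^ k)) (by simpa using hf1) (hf_pow hp)
      (by positivity) ((rpow_neg_lt_rpow_neg (by norm_num) hp3 hσ0.le hσ).trans hs3)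

end eulerQuotientFactor

section EulerProduct

variable {f : ℕ → ℝ} {σ : ℝ}

theorem hasProd_tsum_prime_pow_of_abs_le_one (hσ : 1 < σ) (hf1 : f 1 = 1)
    (hfmul : ∀ a b : ℕ, a.Coprime b → f (a * b) = f a * f b) (hf : ∀ n, n ≠ 0 → |f n| ≤ 1) :
    HasProd (fun p : Nat.Primes => ∑' k, f ((p : ℕ) ^ k) * (((p : ℕ) : ℝ) ^ (-σ)) ^ k)
      (∑' n : ℕ, f (n + 1) / ((n : ℝ) + 1) ^ σ) := by
  set g : ℕ → ℝ := fun n => f n / (n : ℝ) ^ σ with hg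
  have hg0 : g 0 = 0 := by simp [hg, Real.zero_rpow (by linarith : σ ≠ 0)]
  have hg1 : g 1 = 1 := by simp [hg, hf1]
  have hgmul {a b : ℕ} (hab : a.Coprime b) : g (a * b) = g a * g b := by
    simp only [hg, hfmul a b hab, Nat.cast_mul, Real.mul_rpow a.cast_nonneg b.cast_nonneg,
      div_mul_div_comm]
  have hgsum : Summable fun n => ‖g n‖ := by
    refine (Real.summable_nat_rpow.2 (neg_lt_neg hσ)).of_nonneg_of_le
      (fun _ => norm_nonneg _) fun n => ?_
    rcases eq_or_ne n 0 with rfl | hn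
    · rw [hg0, norm_zero]; positivity
    · exact abs_div_rpow_le_rpow_neg (hf n hn) n.cast_nonneg
  have hshift : ∑' n, g n = ∑' n : ℕ, f (n + 1) / ((n : ℝ) + 1) ^ σ := by
    rw [hgsum.of_norm.tsum_eq_zero_add, hg0, zero_add]
    simp only [hg, Nat.cast_add_one]
  have hpow (p k : ℕ) : g (p ^ k) = f (p ^ k) * ((p : ℝ) ^ (-σ)) ^ k := by
    rw [Real.rpow_neg p.cast_nonneg, inv_pow, Real.rpow_pow_comm p.cast_nonneg, ← Nat.cast_pow,
      ← div_eq_mul_inv]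
  simpa only [hshift, hpow] using EulerProduct.eulerProduct_hasProd hg1 hgmul hgsum hg0

theorem tsum_div_rpow_eq_tprod_eulerQuotientFactor_mul_tprod_inv (hσ : 1 < σ) (hf1 : f 1 = 1)
    (hfmul : ∀ a b : ℕ, a.Coprime b → f (a * b) = f a * f b) (hf : ∀ n, n ≠ 0 → |f n| ≤ 1) :
    ∑' n : ℕ, f (n + 1) / ((n : ℝ) + 1) ^ σ =
      (∏' p : Nat.Primes, eulerQuotientFactor f p σ) *
        ∏' p : Nat.Primes, (1 - f p / (p : ℝ) ^ σ)⁻¹ := by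
  have hσ0 : 0 < σ := one_pos.trans hσ
  have hbound (p : Nat.Primes) : |f p / (p : ℝ) ^ σ| ≤ (p : ℝ) ^ (-σ) :=
    abs_div_rpow_le_rpow_neg (hf p p.2.ne_zero) (p : ℕ).cast_nonneg
  have hsum : Summable fun p : Nat.Primes => ‖-(f p / (p : ℝ) ^ σ)‖ :=
    (Nat.Primes.summable_rpow.2 (neg_lt_neg hσ)).of_nonneg_of_le (fun _ => norm_nonneg _)
      fun p => (norm_neg _).trans_le (hbound p)
  have hfactor (p : Nat.Primes) : 1 + -(f p / (p : ℝ) ^ σ) ≠ 0 := by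
    have hlt : (p : ℝ) ^ (-σ) < 1 :=
      Real.rpow_lt_one_of_one_lt_of_neg (mod_cast p.2.one_lt) (neg_neg_of_pos hσ0)
    linarith [le_of_abs_le (hbound p)]
  have hlinear : Multipliable fun p : Nat.Primes => 1 - f p / (p : ℝ) ^ σ := by
    simpa only [sub_eq_add_neg] using multipliable_one_add_of_summable hsum
  have hlinear_ne : ∏' p : Nat.Primes, (1 - f p / (p : ℝ) ^ σ) ≠ 0 := by
    simpa only [sub_eq_add_neg] using tprod_one_add_ne_zero_of_summable hfactor hsum
  have heuler := hasProd_tsum_prime_pow_of_abs_le_one hσ hf1 hfmul hf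
  have hquotient : ∏' p : Nat.Primes, eulerQuotientFactor f p σ =
      (∏' p : Nat.Primes, (1 - f p / (p : ℝ) ^ σ)) *
        ∑' n : ℕ, f (n + 1) / ((n : ℝ) + 1) ^ σ := by
    rw [← heuler.tprod_eq, ← hlinear.tprod_mul heuler.multipliable]
    exact tprod_congr fun p => eulerQuotientFactor.eq_one_sub_mul_tsum p.2.one_lt hσ0 hf1
      fun k => hf _ (pow_ne_zero k p.2.ne_zero)
  rw [hquotient, hlinear.tprod_inv₀ hlinear_ne, mul_right_comm, mul_inv_cancel₀ hlinear_ne,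
    one_mul]

end EulerProduct

theorem stmt_14_general (f : ℕ → ℝ) (hf1 : f 1 = 1)
    (hfmul : ∀ a b : ℕ, Nat.Coprime a b → f (a * b) = f a * f b)
    (hf : ∀ n, n ≠ 0 → |f n| ≤ 1) (hf2 : ∃ k, k ≠ 0 ∧ f (2 ^ k) ≠ -1) :
    ∃ σ₀ ∈ Ioo (0 : ℝ) 1,
      (∀ σ : ℝ, σ₀ < σ →
        Summable (fun p : Nat.Primes => |eulerQuotientFactor f p σ - 1|) ∧
        Multipliable (fun p : Nat.Primes => eulerQuotientFactor f p σ) ∧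
        (∀ p : Nat.Primes, 0 < eulerQuotientFactor f p σ) ∧
        0 < ∏' p : Nat.Primes, eulerQuotientFactor f p σ) ∧
      (∀ σ : ℝ, 1 < σ →
        ∑' n : ℕ, f (n + 1) / ((n : ℝ) + 1) ^ σ =
          (∏' p : Nat.Primes, eulerQuotientFactor f p σ) *
            ∏' p : Nat.Primes, (1 - f p / (p : ℝ) ^ σ)⁻¹) := by
  obtain ⟨σ₀, ⟨hσ₀, hσ₀_lt⟩, hpos⟩ :=
    eulerQuotientFactor.exists_lt_one_forall_pos hf1 hf hf2
  refine ⟨σ₀, ⟨one_half_pos.trans hσ₀, hσ₀_lt⟩, fun σ hσ => ?_, fun σ hσ =>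
    tsum_div_rpow_eq_tprod_eulerQuotientFactor_mul_tprod_inv hσ hf1 hfmul hf⟩
  have hsum := eulerQuotientFactor.summable_abs_sub_one (hσ₀.trans hσ) hf
  have hpos_primes (p : Nat.Primes) : 0 < eulerQuotientFactor f p σ := hpos σ hσ p p.2
  exact ⟨hsum, eulerQuotientFactor.multipliable (hσ₀.trans hσ) hf, hpos_primes,
    tprod_pos_of_summable_abs_sub_one hpos_primes hsum⟩

/-- If `f` is multiplicative with values in `{-1, 1}` and `f (2^k) = 1` for some `k ≥ 1`,
then there is `σ₀ ∈ (0, 1)` such that for `σ > σ₀` the product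
`Π(σ) = ∏_p (1 + ∑_{k ≥ 2} (f (p^k) - f (p^(k-1)) f p)/p^(kσ))` converges absolutely with
strictly positive factors (and `Π(σ) > 0`), and for `σ > 1`,
`∑_{n ≥ 1} f n / n^σ = Π(σ) · ∏_p (1 - f p / p^σ)⁻¹`. -/
theorem stmt_14 (f : ℕ → ℤ)
    (hf1 : f 1 = 1)
    (hfmul : ∀ a b : ℕ, Nat.Coprime a b → f (a * b) = f a * f b)
    (hfpm : ∀ n : ℕ, 1 ≤ n → f n = 1 ∨ f n = -1)
    (hf2 : ∃ k : ℕ, 1 ≤ k ∧ f (2 ^ k) = 1) :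
    ∃ σ₀ ∈ Set.Ioo (0 : ℝ) 1,
      (∀ σ : ℝ, σ₀ < σ →
        Summable (fun p : Nat.Primes => |piFactor f (p : ℕ) σ - 1|) ∧
        Multipliable (fun p : Nat.Primes => piFactor f (p : ℕ) σ) ∧
        (∀ p : Nat.Primes, 0 < piFactor f (p : ℕ) σ) ∧
        0 < ∏' p : Nat.Primes, piFactor f (p : ℕ) σ) ∧
      (∀ σ : ℝ, 1 < σ →
        (∑' n : ℕ, (f (n + 1) : ℝ) / ((n : ℝ) + 1) ^ σ) =
          (∏' p : Nat.Primes, piFactor f (p : ℕ) σ) *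
            ∏' p : Nat.Primes, (1 - (f (p : ℕ) : ℝ) / (p : ℝ) ^ σ)⁻¹) := by
  obtain ⟨k, hk, hfk⟩ := hf2
  have hf_abs (n : ℕ) (hn : n ≠ 0) : |(f n : ℝ)| ≤ 1 := by
    rcases hfpm n (Nat.one_le_iff_ne_zero.2 hn) with h | h <;> simp [h]
  exact stmt_14_general (fun n => (f n : ℝ)) (mod_cast hf1) (mod_cast hfmul) hf_abs
    ⟨k, Nat.one_le_iff_ne_zero.1 hk, by norm_num [hfk]⟩
end

section
/- Let f : ℕ → ℤ be a completely multiplicative function taking values in {-1, 1}. If ∑_{p ≤ x} f(p)/p → ∞ as x → ∞ (the sum over primes p), then the partial sums of f are unbounded: lim sup_{N→∞} |∑_{n=1}^{N} f(n)| = ∞. -/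
/-!
Suppose `∑_{n ≤ N} f n ≤ C` for all `N`. By Abel summation `F(s) = ∑ f n * n ^ (-s) ≤ C` for every
`s > 1`. On the other hand `(1 - x)⁻¹ ≥ exp x` turns the Euler product of `F` into
`F(s) ≥ exp (∑_p f p * p ^ (-s))`, and the sum over primes tends to `∞` as `s → 1⁺` because
`∑_p f p / p` diverges to `∞`, by an Abelian theorem. For `s` close to `1` this
contradicts `F(s) ≤ C`.
-/

open Filter Finset Topology

section AbelSummation

variable {R : Type*} [CommRing R] [PartialOrder R] [IsOrderedRing R]
  {a w : ℕ → R} {c : R} {m n : ℕ}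

theorem sum_Ico_mul_le_of_antitoneOn
    (hw : AntitoneOn w (Set.Ici m)) (hw₀ : ∀ k, m ≤ k → 0 ≤ w k)
    (ha : ∀ k, m ≤ k → ∑ i ∈ Ico m k, a i ≤ c) (hmn : m ≤ n) :
    ∑ i ∈ Ico m n, a i * w i ≤ c * w m := by
  -- Keeping the slack `∑ a i - c ≤ 0` with the last weight makes the induction close.
  suffices h : ∑ i ∈ Ico m n, a i * w i ≤ c * w m + (∑ i ∈ Ico m n, a i - c) * w n from
    h.trans (add_le_of_nonpos_right
      (mul_nonpos_of_nonpos_of_nonneg (sub_nonpos.2 (ha n hmn)) (hw₀ n hmn)))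
  induction n, hmn using Nat.le_induction with
  | base => simp
  | succ n hmn ih =>
    calc ∑ i ∈ Ico m (n + 1), a i * w i
        = ∑ i ∈ Ico m n, a i * w i + a n * w n := sum_Ico_succ_top hmn _
      _ ≤ c * w m + (∑ i ∈ Ico m n, a i - c) * w n + a n * w n := by gcongr
      _ = c * w m + (∑ i ∈ Ico m (n + 1), a i - c) * w n := by rw [sum_Ico_succ_top hmn]; ring
      _ ≤ c * w m + (∑ i ∈ Ico m (n + 1), a i - c) * w (n + 1) := by
        gcongr c * w m + ?_
        exact mul_le_mul_of_nonpos_left (hw hmn (Nat.le_succ_of_le hmn) n.le_succ)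
          (sub_nonpos.2 (ha _ (Nat.le_succ_of_le hmn)))

theorem le_sum_Ico_mul_of_antitoneOn
    (hw : AntitoneOn w (Set.Ici m)) (hw₀ : ∀ k, m ≤ k → 0 ≤ w k)
    (ha : ∀ k, m ≤ k → c ≤ ∑ i ∈ Ico m k, a i) (hmn : m ≤ n) :
    c * w m ≤ ∑ i ∈ Ico m n, a i * w i := by
  simpa using sum_Ico_mul_le_of_antitoneOn (a := -a) (c := -c) hw hw₀ (by simpa using ha) hmn

end AbelSummation

-- To get above `K`, cut at an `M` beyond which the partial sums of `a` are at least `K + 1`: the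
-- head converges along `l`, and Abel summation bounds the tail below by a multiple of `w t M`.
theorem tendsto_tsum_mul_atTop {ι : Type*} {l : Filter ι} {a : ℕ → ℝ} {w : ι → ℕ → ℝ}
    (ha : Tendsto (fun N ↦ ∑ n ∈ range N, a n) atTop atTop)
    (hw : ∀ᶠ t in l, Antitone (w t)) (hw₀ : ∀ᶠ t in l, ∀ n, 0 ≤ w t n)
    (hw₁ : ∀ n, Tendsto (w · n) l (𝓝 1)) (hsum : ∀ᶠ t in l, Summable fun n ↦ a n * w t n) :
    Tendsto (fun t ↦ ∑' n, a n * w t n) l atTop := by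
  refine tendsto_atTop.2 fun K ↦ ?_
  obtain ⟨M, hM⟩ := eventually_atTop.1 (ha.eventually_ge_atTop (K + 1))
  have tail_ge (N : ℕ) (hN : M ≤ N) : K + 1 - ∑ n ∈ range M, a n ≤ ∑ n ∈ Ico M N, a n := by
    linarith [hM N hN, sum_range_add_sum_Ico a hN]
  have lower_bound_tendsto : Tendsto
      (fun t ↦ ∑ n ∈ range M, a n * w t n + (K + 1 - ∑ n ∈ range M, a n) * w t M) l
      (𝓝 (K + 1)) := by
    convert (tendsto_finsetSum (range M) fun n _ ↦ (hw₁ n).const_mul (a n)).add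
      ((hw₁ M).const_mul (K + 1 - ∑ n ∈ range M, a n)) using 2
    simp
  filter_upwards [hw, hw₀, hsum, lower_bound_tendsto.eventually_const_le (lt_add_one K)]
    with t anti nonneg summable hK
  refine ge_of_tendsto summable.hasSum.tendsto_sum_nat (eventually_atTop.2 ⟨M, fun N hN ↦ ?_⟩)
  rw [← sum_range_add_sum_Ico _ hN]
  exact hK.trans (add_le_add_right
    (le_sum_Ico_mul_of_antitoneOn (anti.antitoneOn _) (fun k _ ↦ nonneg k) tail_ge hN) _)

-- As `log 0 = 0`, the weight `exp (-(s - 1) * log n)` is antitone on all of `ℕ`, unlike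
-- `n ^ (-(s - 1))`, which vanishes at `0`.
theorem div_mul_exp_neg_mul_log (a : ℕ → ℝ) {s : ℝ} (hs : s ≠ 0) (n : ℕ) :
    a n / n * Real.exp (-(s - 1) * Real.log n) = a n * (n : ℝ) ^ (-s) := by
  rcases n.eq_zero_or_pos with rfl | hn
  · simp [hs]
  · have hn' : (0 : ℝ) < n := Nat.cast_pos.2 hn
    rw [mul_comm (-(s - 1)), ← Real.rpow_def_of_pos hn', div_eq_mul_inv, ← Real.rpow_neg_one,
      mul_assoc, ← Real.rpow_add hn']
    ring_nf

theorem tendsto_tsum_mul_rpow_neg_atTop {a : ℕ → ℝ}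
    (ha : Tendsto (fun N ↦ ∑ n ∈ range N, a n / n) atTop atTop)
    (hsum : ∀ s : ℝ, 1 < s → Summable fun n ↦ a n * (n : ℝ) ^ (-s)) :
    Tendsto (fun s : ℝ ↦ ∑' n, a n * (n : ℝ) ^ (-s)) (𝓝[>] 1) atTop := by
  have weight_eq (s : ℝ) (hs : 1 < s) := div_mul_exp_neg_mul_log a (zero_lt_one.trans hs).ne'
  refine (tendsto_tsum_mul_atTop (w := fun s n ↦ Real.exp (-(s - 1) * Real.log n)) ha
    ?_ ?_ ?_ ?_).congr' ?_
  · filter_upwards [self_mem_nhdsWithin] with s (hs : 1 < s)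
    have log_mono : Monotone fun n : ℕ ↦ Real.log n := by
      intro m n hmn
      rcases m.eq_zero_or_pos with rfl | hm
      · simpa using Real.log_natCast_nonneg n
      · exact Real.log_le_log (by positivity) (by exact_mod_cast hmn)
    exact Real.exp_monotone.comp_antitone (log_mono.const_mul_of_nonpos (by linarith))
  · exact .of_forall fun s n ↦ (Real.exp_pos _).le
  · refine fun n ↦ tendsto_nhdsWithin_of_tendsto_nhds (Continuous.tendsto' ?_ _ _ (by simp))
    fun_prop
  · filter_upwards [self_mem_nhdsWithin] with s hs
    simpa only [weight_eq s hs] using hsum s hs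
  · filter_upwards [self_mem_nhdsWithin] with s hs
    exact tsum_congr (weight_eq s hs)

theorem tendsto_tsum_primes_mul_rpow_neg_atTop {f : ℕ → ℝ}
    (hf : Tendsto (fun N : ℕ ↦ ∑ p ∈ N.primesBelow, f p / p) atTop atTop)
    (hsum : ∀ s : ℝ, 1 < s → Summable fun p : Nat.Primes ↦ f p * (p : ℝ) ^ (-s)) :
    Tendsto (fun s : ℝ ↦ ∑' p : Nat.Primes, f p * (p : ℝ) ^ (-s)) (𝓝[>] 1) atTop := by
  have indicator_mul (s : ℝ) (n : ℕ) : {p : ℕ | p.Prime}.indicator f n * (n : ℝ) ^ (-s) =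
      {p : ℕ | p.Prime}.indicator (fun p : ℕ ↦ f p * (p : ℝ) ^ (-s)) n :=
    (Set.indicator_mul_left _ f fun p : ℕ ↦ (p : ℝ) ^ (-s)).symm
  have partialSum_eq (N : ℕ) : ∑ p ∈ N.primesBelow, f p / p =
      ∑ n ∈ range N, {p : ℕ | p.Prime}.indicator f n / n := by
    simp [Nat.primesBelow, sum_filter, Set.indicator_apply, ite_div]
  have tsum_eq (s : ℝ) : ∑' n, {p : ℕ | p.Prime}.indicator f n * (n : ℝ) ^ (-s) =
      ∑' p : Nat.Primes, f p * (p : ℝ) ^ (-s) := by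
    simp only [indicator_mul]
    exact (tsum_subtype {p : ℕ | p.Prime} fun p : ℕ ↦ f p * (p : ℝ) ^ (-s)).symm
  refine (tendsto_tsum_mul_rpow_neg_atTop (hf.congr partialSum_eq) fun s hs ↦ ?_).congr tsum_eq
  simp only [indicator_mul]
  exact summable_subtype_iff_indicator.1 (hsum s hs)

theorem exp_le_inv_one_sub {x : ℝ} (hx : x < 1) : Real.exp x ≤ (1 - x)⁻¹ := by
  rw [le_inv_comm₀ (Real.exp_pos x) (sub_pos.2 hx), ← Real.exp_neg]
  exact Real.one_sub_le_exp_neg x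

theorem exp_tsum_primes_le_tsum {g : ℕ →*₀ ℝ} (hg : Summable g) :
    Real.exp (∑' p : Nat.Primes, g p) ≤ ∑' n, g n := by
  have lt_one (p : Nat.Primes) : g p < 1 :=
    (Real.le_norm_self _).trans_lt (Summable.norm_lt_one (f := (g : ℕ →* ℝ)) hg p.2.one_lt)
  have summable_primes : Summable fun p : Nat.Primes ↦ g p :=
    hg.comp_injective Nat.Primes.coe_nat_injective
  exact le_of_tendsto_of_tendsto' summable_primes.hasSum.rexp
    (EulerProduct.eulerProduct_completely_multiplicative_hasProd hg.norm) fun S ↦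
    prod_le_prod (fun p _ ↦ (Real.exp_pos _).le) fun p _ ↦ exp_le_inv_one_sub (lt_one p)

theorem tsum_mul_rpow_neg_le {f : ℕ → ℝ} {C s : ℝ} (hs : 0 < s)
    (hC : ∀ N, ∑ n ∈ Icc 1 N, f n ≤ C) (hsum : Summable fun n ↦ f n * (n : ℝ) ^ (-s)) :
    ∑' n, f n * (n : ℝ) ^ (-s) ≤ C := by
  have anti : AntitoneOn (fun n : ℕ ↦ (n : ℝ) ^ (-s)) (Set.Ici 1) := fun m hm n _ hmn ↦
    Real.rpow_le_rpow_of_nonpos (Nat.cast_pos.2 hm) (Nat.cast_le.2 hmn) (neg_nonpos.2 hs.le)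
  refine le_of_tendsto (hsum.hasSum.tendsto_sum_nat) ?_
  filter_upwards [eventually_ge_atTop 1] with N hN
  calc ∑ n ∈ range N, f n * (n : ℝ) ^ (-s)
      = ∑ n ∈ Ico 1 N, f n * (n : ℝ) ^ (-s) := by
        rw [range_eq_Ico, sum_eq_sum_Ico_succ_bot hN]; simp [hs.ne']
    _ ≤ C * ((1 : ℕ) : ℝ) ^ (-s) :=
        sum_Ico_mul_le_of_antitoneOn anti (fun n _ ↦ by positivity)
          (fun k hk ↦ by
            obtain ⟨k, rfl⟩ := Nat.exists_eq_add_of_le' hk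
            exact hC k) hN
    _ = C := by simp

/-- The summand `n ↦ f n * n ^ (-s)` of the Dirichlet series of a completely multiplicative `f`,
bundled as a monoid-with-zero homomorphism so that Euler products apply to it. It vanishes at `0`
even when `f 0 = 1`, because `(0 : ℝ) ^ (-s) = 0` for `s ≠ 0`. -/
noncomputable def mulRpowNegHom (f : ℕ →* ℝ) {s : ℝ} (hs : s ≠ 0) : ℕ →*₀ ℝ where
  toFun n := f n * (n : ℝ) ^ (-s)
  map_zero' := by simp [hs]
  map_one' := by simp
  map_mul' m n := by
    rw [map_mul, Nat.cast_mul, Real.mul_rpow m.cast_nonneg n.cast_nonneg, mul_mul_mul_comm]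

theorem summable_mul_rpow_neg {f : ℕ → ℝ} {B : ℝ} (hf : ∀ n ≠ 0, |f n| ≤ B) {s : ℝ}
    (hs : 1 < s) : Summable fun n ↦ f n * (n : ℝ) ^ (-s) := by
  refine .of_norm_bounded ((Real.summable_nat_rpow.2 (neg_lt_neg hs)).mul_left B) fun n ↦ ?_
  rcases eq_or_ne n 0 with rfl | hn
  · simp [(zero_lt_one.trans hs).ne']
  · rw [norm_mul, Real.norm_of_nonneg (by positivity : 0 ≤ (n : ℝ) ^ (-s))]
    exact mul_le_mul_of_nonneg_right (hf n hn) (by positivity)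

theorem stmt_15_general (f : ℕ →* ℝ)
    (hsum : ∀ s : ℝ, 1 < s → Summable fun n ↦ f n * (n : ℝ) ^ (-s))
    (hdiv : Tendsto (fun N : ℕ ↦ ∑ p ∈ N.primesBelow, f p / p) atTop atTop) (C : ℝ) :
    ∃ N : ℕ, C < ∑ n ∈ Icc 1 N, f n := by
  by_contra! hC
  have primes_tendsto := tendsto_tsum_primes_mul_rpow_neg_atTop hdiv fun s hs ↦
    (hsum s hs).comp_injective Nat.Primes.coe_nat_injective
  obtain ⟨s, hC_lt, hs : 1 < s⟩ :=
    ((primes_tendsto.eventually_gt_atTop C).and self_mem_nhdsWithin).exists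
  have hs₀ : 0 < s := zero_lt_one.trans hs
  refine lt_irrefl C ?_
  calc C < ∑' p : Nat.Primes, f p * (p : ℝ) ^ (-s) := hC_lt
    _ ≤ Real.exp (∑' p : Nat.Primes, f p * (p : ℝ) ^ (-s)) :=
      (le_add_of_nonneg_right zero_le_one).trans (Real.add_one_le_exp _)
    _ ≤ ∑' n : ℕ, f n * (n : ℝ) ^ (-s) :=
      exp_tsum_primes_le_tsum (g := mulRpowNegHom f hs₀.ne') (hsum s hs)
    _ ≤ C := tsum_mul_rpow_neg_le hs₀ hC (hsum s hs)

/-- If `f` is completely multiplicative with values in `{-1, 1}` and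
`∑_{p ≤ x} f p / p → ∞`, then the partial sums of `f` are unbounded. -/
theorem stmt_15 (f : ℕ → ℤ)
    (hf1 : f 1 = 1)
    (hfmul : ∀ a b : ℕ, f (a * b) = f a * f b)
    (hfpm : ∀ n : ℕ, 1 ≤ n → f n = 1 ∨ f n = -1)
    (hdiv : Filter.Tendsto (fun N : ℕ => ∑ p ∈ N.primesBelow, (f p : ℝ) / p)
      Filter.atTop Filter.atTop) :
    ∀ C : ℝ, ∃ N : ℕ, C < |((∑ n ∈ Finset.Icc 1 N, f n : ℤ) : ℝ)| := by
  intro C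
  let F : ℕ →* ℝ := ⟨⟨fun n ↦ f n, by simp [hf1]⟩, by simp [hfmul]⟩
  have abs_le_one (n : ℕ) (hn : n ≠ 0) : |F n| ≤ 1 := by
    rcases hfpm n (Nat.one_le_iff_ne_zero.2 hn) with h | h <;> simp [F, h]
  obtain ⟨N, hN⟩ := stmt_15_general F (fun _ ↦ summable_mul_rpow_neg abs_le_one) hdiv C
  exact ⟨N, hN.trans_le (by push_cast; exact le_abs_self _)⟩
end

section
/- Let f : ℕ → ℤ be a completely multiplicative function taking values in {-1, 1}. If ∑_{p ≤ x} f(p)/p → -∞ as x → ∞ (the sum over primes p), then the partial sums of μ·f are unbounded: lim sup_{N→∞} |∑_{n=1}^{N} μ(n) f(n)| = ∞, where μ is the Möbius function. -/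
/-!
Suppose the partial sums of `g = μ · f` are at most `C`. Summation by parts bounds the Dirichlet
series `D(s) = ∑ g(n) n⁻ˢ` by `C` for every `s > 1`. On the other hand `D` has the Euler product
`∏ (1 + g(p) p⁻ˢ)`, and `log (1 + x) ≥ x - 2x²` for `x ≥ -1/2`, so
`D(s) ≥ exp (∑ g(p) p⁻ˢ - 2 ∑ p⁻²)`. Since `∑ g(p) / p = -∑ f(p) / p = ∞`, Abel's theorem shows that
the right-hand side tends to infinity as `s → 1⁺`.
-/

open Filter Finset Topology

theorem sum_range_mul_le_of_antitone {R : Type*} [CommRing R] [LinearOrder R]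
    [IsStrictOrderedRing R] {w a : ℕ → R} {B : R} (hw : Antitone w) (hw₀ : ∀ i, 0 ≤ w i)
    (ha : ∀ n, ∑ i ∈ range n, a i ≤ B) (n : ℕ) :
    ∑ i ∈ range n, w i * a i ≤ w 0 * B := by
  rcases n with _ | n
  · simpa using mul_nonneg (hw₀ 0) (by simpa using ha 0)
  calc ∑ i ∈ range (n + 1), w i * a i
      = w n * ∑ i ∈ range (n + 1), a i
          + ∑ i ∈ range n, (w i - w (i + 1)) * ∑ j ∈ range (i + 1), a j := by
        have h := sum_range_by_parts w a (n + 1)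
        simp only [smul_eq_mul, Nat.add_sub_cancel] at h
        rw [h, sub_eq_add_neg, ← sum_neg_distrib]
        simp only [← neg_mul, neg_sub]
    _ ≤ w n * B + ∑ i ∈ range n, (w i - w (i + 1)) * B := by
        gcongr with i
        · exact hw₀ n
        · exact ha _
        · exact sub_nonneg.2 (hw i.le_succ)
        · exact ha _
    _ = w 0 * B := by
        rw [← sum_mul, sum_range_sub']
        ring

theorem tsum_mul_le_of_antitone {w a : ℕ → ℝ} {B : ℝ} (hw : Antitone w) (hw₀ : ∀ i, 0 ≤ w i)
    (hsum : Summable fun i ↦ w i * a i) (ha : ∀ n, ∑ i ∈ range n, a i ≤ B) :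
    ∑' i, w i * a i ≤ w 0 * B :=
  le_of_tendsto' hsum.hasSum.tendsto_sum_nat (sum_range_mul_le_of_antitone hw hw₀ ha)

theorem le_tsum_mul_of_antitone {w a : ℕ → ℝ} {B : ℝ} (hw : Antitone w) (hw₀ : ∀ i, 0 ≤ w i)
    (hsum : Summable fun i ↦ w i * a i) (ha : ∀ n, B ≤ ∑ i ∈ range n, a i) :
    w 0 * B ≤ ∑' i, w i * a i := by
  have h := tsum_mul_le_of_antitone (a := fun i ↦ -a i) (B := -B) hw hw₀
    (by simpa only [mul_neg] using hsum.neg) (fun n ↦ by simpa using ha n)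
  simpa only [mul_neg, tsum_neg, neg_le_neg_iff] using h

theorem tendsto_tsum_mul_atTop_of_antitone {ι : Type*} {l : Filter ι} {w : ι → ℕ → ℝ} {a : ℕ → ℝ}
    (hw : ∀ᶠ t in l, Antitone (w t)) (hw₀ : ∀ᶠ t in l, ∀ i, 0 ≤ w t i)
    (hw₁ : ∀ i, Tendsto (fun t ↦ w t i) l (𝓝 1))
    (hsum : ∀ᶠ t in l, Summable fun i ↦ w t i * a i)
    (ha : Tendsto (fun n ↦ ∑ i ∈ range n, a i) atTop atTop) :
    Tendsto (fun t ↦ ∑' i, w t i * a i) l atTop := by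
  refine tendsto_atTop.2 fun M ↦ ?_
  obtain ⟨k, hk⟩ := eventually_atTop.1 (tendsto_atTop.1 ha (M + 1))
  set A := ∑ i ∈ range k, a i with hA
  have head_tendsto : Tendsto (fun t ↦ ∑ i ∈ range k, w t i * a i + w t k * (M + 1 - A)) l
      (𝓝 (M + 1)) := by
    have h := (tendsto_finsetSum (range k) fun i _ ↦ (hw₁ i).mul_const (a i)).add
      ((hw₁ k).mul_const (M + 1 - A))
    simpa only [one_mul, ← hA, add_sub_cancel] using h
  filter_upwards [hw, hw₀, hsum, head_tendsto.eventually_const_le (lt_add_one M)]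
    with t hanti hnonneg hsummable hhead
  have tail_ge : w t k * (M + 1 - A) ≤ ∑' i, w t (i + k) * a (i + k) := by
    have h := le_tsum_mul_of_antitone (w := fun i ↦ w t (i + k)) (a := fun i ↦ a (i + k))
      (B := M + 1 - A) (fun i j hij ↦ hanti (by gcongr)) (fun i ↦ hnonneg _)
      ((summable_nat_add_iff k).2 hsummable) fun n ↦ by
        have hn := hk (k + n) (Nat.le_add_right k n)
        rw [sum_range_add] at hn
        simp only [add_comm k] at hn
        linarith
    simpa only [zero_add] using h
  rw [← hsummable.sum_add_tsum_nat_add k]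
  linarith

theorem antitone_natCast_succ_rpow_neg {s : ℝ} (hs : 0 ≤ s) :
    Antitone fun i : ℕ ↦ ((i + 1 : ℕ) : ℝ) ^ (-s) := fun i j hij ↦
  Real.rpow_le_rpow_of_nonpos (by positivity) (by gcongr) (neg_nonpos.2 hs)

-- The weight `n ^ (-s)` is antitone only from `n = 1` on, since `0 ^ (-s) = 0` for `s ≠ 0`; the
-- shift of index makes summation by parts applicable.
theorem tsum_rpow_neg_mul_eq_tsum_succ {s : ℝ} (hs : s ≠ 0) (a : ℕ → ℝ) :
    ∑' n : ℕ, (n : ℝ) ^ (-s) * a n = ∑' n : ℕ, ((n + 1 : ℕ) : ℝ) ^ (-s) * a (n + 1) := by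
  refine (Nat.succ_injective.tsum_eq fun n hn ↦ ?_).symm
  refine ⟨n - 1, Nat.succ_pred_eq_of_ne_zero ?_⟩
  rintro rfl
  simp [Real.zero_rpow (neg_ne_zero.2 hs)] at hn

theorem tsum_rpow_neg_mul_le {a : ℕ → ℝ} {s C : ℝ} (hs : 0 < s)
    (hsum : Summable fun n : ℕ ↦ (n : ℝ) ^ (-s) * a n)
    (ha : ∀ N, ∑ n ∈ Icc 1 N, a n ≤ C) :
    ∑' n : ℕ, (n : ℝ) ^ (-s) * a n ≤ C := by
  rw [tsum_rpow_neg_mul_eq_tsum_succ hs.ne']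
  refine (tsum_mul_le_of_antitone (a := fun n ↦ a (n + 1)) (B := C)
    (antitone_natCast_succ_rpow_neg hs.le) (fun i ↦ by positivity)
    ((summable_nat_add_iff 1).2 hsum) fun N ↦ ?_).trans_eq (by simp)
  rw [range_eq_Ico, sum_Ico_add', zero_add, Ico_add_one_right_eq_Icc]
  exact ha N

theorem tendsto_tsum_rpow_neg_mul_atTop {a : ℕ → ℝ}
    (hsum : ∀ δ : ℝ, 0 < δ → Summable fun n : ℕ ↦ (n : ℝ) ^ (-δ) * a n)
    (ha : Tendsto (fun N ↦ ∑ n ∈ range N, a n) atTop atTop) :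
    Tendsto (fun δ : ℝ ↦ ∑' n : ℕ, (n : ℝ) ^ (-δ) * a n) (𝓝[>] 0) atTop := by
  have ha_succ : Tendsto (fun N ↦ ∑ n ∈ range N, a (n + 1)) atTop atTop := by
    have h := tendsto_atTop_add_const_right _ (-a 0) (ha.comp (tendsto_add_atTop_nat 1))
    simpa only [Function.comp_def, sum_range_succ', add_neg_cancel_right] using h
  have weight_tendsto (i : ℕ) :
      Tendsto (fun δ : ℝ ↦ ((i + 1 : ℕ) : ℝ) ^ (-δ)) (𝓝[>] 0) (𝓝 1) := by
    have hcont : Continuous fun δ : ℝ ↦ ((i + 1 : ℕ) : ℝ) ^ (-δ) :=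
      continuous_const.rpow continuous_neg fun _ ↦ Or.inl (by positivity)
    exact (hcont.tendsto' 0 1 (by simp)).mono_left nhdsWithin_le_nhds
  refine (tendsto_tsum_mul_atTop_of_antitone ?_ ?_ weight_tendsto ?_ ha_succ).congr' ?_
  all_goals filter_upwards [self_mem_nhdsWithin] with δ (hδ : 0 < δ)
  · exact antitone_natCast_succ_rpow_neg hδ.le
  · intro i
    positivity
  · exact (summable_nat_add_iff 1).2 (hsum δ hδ)
  · exact (tsum_rpow_neg_mul_eq_tsum_succ hδ.ne' a).symm

theorem summable_norm_rpow_neg_mul {a : ℕ → ℝ} {s : ℝ} (hs : 1 < s) (ha : ∀ n, |a n| ≤ 1) :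
    Summable fun n : ℕ ↦ ‖(n : ℝ) ^ (-s) * a n‖ := by
  refine (Real.summable_nat_rpow.2 (neg_lt_neg hs)).of_nonneg_of_le (fun _ ↦ norm_nonneg _)
    fun n ↦ ?_
  rw [norm_mul, Real.norm_of_nonneg (by positivity), Real.norm_eq_abs]
  exact mul_le_of_le_one_right (by positivity) (ha n)

theorem tendsto_tsum_primes_rpow_neg_mul_atTop {a : ℕ → ℝ} (ha : ∀ p : ℕ, p.Prime → |a p| ≤ 1)
    (hdiv : Tendsto (fun N : ℕ ↦ ∑ p ∈ N.primesBelow, a p / p) atTop atTop) :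
    Tendsto (fun δ : ℝ ↦ ∑' p : Nat.Primes, (p : ℝ) ^ (-(1 + δ)) * a p) (𝓝[>] 0) atTop := by
  let b : ℕ → ℝ := {p : ℕ | p.Prime}.indicator a
  have hb (n : ℕ) : |b n| ≤ 1 := by
    by_cases hn : n.Prime <;> simp [b, hn, ha]
  have rpow_split (δ : ℝ) (n : ℕ) :
      (n : ℝ) ^ (-(1 + δ)) * b n = (n : ℝ) ^ (-δ) * (b n / n) := by
    rcases n.eq_zero_or_pos with rfl | hn
    · simp [b, Nat.not_prime_zero]
    · rw [show -(1 + δ) = -δ + -1 by ring, Real.rpow_add (by positivity), Real.rpow_neg_one]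
      ring
  have hsum (δ : ℝ) (hδ : 0 < δ) : Summable fun n : ℕ ↦ (n : ℝ) ^ (-δ) * (b n / n) := by
    simpa only [rpow_split δ] using
      (summable_norm_rpow_neg_mul (lt_add_of_pos_right 1 hδ) hb).of_norm
  refine (tendsto_tsum_rpow_neg_mul_atTop hsum (hdiv.congr fun N ↦ ?_)).congr fun δ ↦ ?_
  · rw [Nat.primesBelow, sum_filter]
    refine sum_congr rfl fun n _ ↦ ?_
    by_cases hn : n.Prime <;> simp [b, hn]
  · calc ∑' n : ℕ, (n : ℝ) ^ (-δ) * (b n / n)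
        = ∑' n : ℕ, {p : ℕ | p.Prime}.indicator (fun n ↦ (n : ℝ) ^ (-(1 + δ)) * a n) n :=
          tsum_congr fun n ↦ by rw [← rpow_split, Set.indicator_mul_right]
      _ = ∑' p : Nat.Primes, (p : ℝ) ^ (-(1 + δ)) * a p :=
          (tsum_subtype {p : ℕ | p.Prime} fun n ↦ (n : ℝ) ^ (-(1 + δ)) * a n).symm

theorem exp_sub_two_mul_sq_le_one_add {x : ℝ} (hx : -(1 / 2) ≤ x) :
    Real.exp (x - 2 * x ^ 2) ≤ 1 + x := by
  have hpos : 0 < 1 + x := by linarith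
  rw [← Real.le_log_iff_exp_le hpos]
  refine le_trans ?_ (Real.one_sub_inv_le_log_of_pos hpos)
  have hdiff : 1 - (1 + x)⁻¹ - (x - 2 * x ^ 2) = x ^ 2 * (1 + 2 * x) / (1 + x) := by
    field_simp
    ring
  have hnonneg : 0 ≤ x ^ 2 * (1 + 2 * x) / (1 + x) := by
    have : 0 ≤ 1 + 2 * x := by linarith
    positivity
  linarith

/-- A multiplicative function `g` that is supported on the squarefree integers, such as `μ · f` for
a multiplicative `f`; its Euler factor at `p` is `1 + g p`. In particular `g 0 = 0`. -/
structure IsSquarefreeMultiplicative {R : Type*} [MonoidWithZero R] (g : ℕ → R) : Prop where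
  map_one : g 1 = 1
  map_mul_of_coprime : ∀ {m n : ℕ}, m.Coprime n → g (m * n) = g m * g n
  map_of_not_squarefree : ∀ {n : ℕ}, ¬Squarefree n → g n = 0

namespace IsSquarefreeMultiplicative

theorem moebius_mul {R : Type*} [CommRing R] {f : ℕ → R} (hf₁ : f 1 = 1)
    (hfmul : ∀ {m n : ℕ}, m.Coprime n → f (m * n) = f m * f n) :
    IsSquarefreeMultiplicative fun n ↦ (ArithmeticFunction.moebius n : R) * f n where
  map_one := by simp [hf₁]
  map_mul_of_coprime hmn := by
    rw [ArithmeticFunction.isMultiplicative_moebius.map_mul_of_coprime hmn, hfmul hmn, Int.cast_mul]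
    ring
  map_of_not_squarefree hn := by
    simp [ArithmeticFunction.moebius_eq_zero_of_not_squarefree hn]

theorem map_zero {R : Type*} [MonoidWithZero R] {g : ℕ → R} (hg : IsSquarefreeMultiplicative g) :
    g 0 = 0 :=
  hg.map_of_not_squarefree not_squarefree_zero

theorem map_prime_pow {R : Type*} [MonoidWithZero R] {g : ℕ → R}
    (hg : IsSquarefreeMultiplicative g) {p k : ℕ} (hp : p.Prime) (hk : 2 ≤ k) : g (p ^ k) = 0 :=
  hg.map_of_not_squarefree fun h ↦ by
    have := ((Nat.squarefree_pow_iff hp.ne_one (by lia)).1 h).2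
    lia

theorem tsum_prime_pow {R : Type*} [Semiring R] [TopologicalSpace R] {g : ℕ → R}
    (hg : IsSquarefreeMultiplicative g) {p : ℕ} (hp : p.Prime) : ∑' e, g (p ^ e) = 1 + g p := by
  have hzero (e : ℕ) (he : e ∉ range 2) : g (p ^ e) = 0 :=
    hg.map_prime_pow hp (not_lt.1 (mt mem_range.2 he))
  rw [tsum_eq_sum hzero]
  simp [sum_range_succ, hg.map_one]

variable {g : ℕ → ℝ}

theorem abs_le_one (hg : IsSquarefreeMultiplicative g) (hgp : ∀ p : ℕ, p.Prime → |g p| ≤ 1)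
    (n : ℕ) : |g n| ≤ 1 := by
  induction n using Nat.recOnPosPrimePosCoprime with
  | prime_pow p k hp hk =>
    obtain rfl | hk₂ : k = 1 ∨ 2 ≤ k := by lia
    · simpa using hgp p hp
    · simp [hg.map_prime_pow hp hk₂]
  | zero => simp [hg.map_zero]
  | one => simp [hg.map_one]
  | coprime m n _ _ hmn hm hn =>
    rw [hg.map_mul_of_coprime hmn, abs_mul]
    exact mul_le_one₀ hm (abs_nonneg _) hn

theorem rpow_neg_mul (hg : IsSquarefreeMultiplicative g) (s : ℝ) :
    IsSquarefreeMultiplicative fun n : ℕ ↦ (n : ℝ) ^ (-s) * g n where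
  map_one := by simp [hg.map_one]
  map_mul_of_coprime hmn := by
    rw [hg.map_mul_of_coprime hmn, Nat.cast_mul, Real.mul_rpow (by positivity) (by positivity)]
    ring
  map_of_not_squarefree hn := by simp [hg.map_of_not_squarefree hn]

theorem hasProd_one_add (hg : IsSquarefreeMultiplicative g) (hsum : Summable fun n ↦ ‖g n‖) :
    HasProd (fun p : Nat.Primes ↦ 1 + g p) (∑' n, g n) := by
  rw [← funext fun p : Nat.Primes ↦ hg.tsum_prime_pow p.prop]
  exact EulerProduct.eulerProduct_hasProd hg.map_one hg.map_mul_of_coprime hsum hg.map_zero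

theorem exp_tsum_primes_le_tsum (hg : IsSquarefreeMultiplicative g)
    (hsum : Summable fun n ↦ ‖g n‖) (hgp : ∀ p : ℕ, p.Prime → |g p| ≤ 1 / p) :
    Real.exp (∑' p : Nat.Primes, g p - 2 * ∑' p : Nat.Primes, 1 / (p : ℝ) ^ 2) ≤ ∑' n, g n := by
  have hsq : Summable fun p : Nat.Primes ↦ 1 / (p : ℝ) ^ 2 :=
    (Real.summable_one_div_nat_pow.2 one_lt_two).comp_injective Subtype.val_injective
  have hexp := ((hsum.of_norm.comp_injective Subtype.val_injective).hasSum.sub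
    (hsq.hasSum.mul_left 2)).rexp
  refine le_of_tendsto_of_tendsto' hexp (hg.hasProd_one_add hsum) fun s ↦
    prod_le_prod (fun _ _ ↦ (Real.exp_pos _).le) fun p _ ↦ ?_
  have habs : |g p| ≤ 1 / (p : ℝ) := hgp p p.prop
  have hhalf : (1 : ℝ) / p ≤ 1 / 2 :=
    one_div_le_one_div_of_le two_pos (mod_cast p.prop.two_le)
  have hsq_le : g p ^ 2 ≤ 1 / (p : ℝ) ^ 2 := by
    rw [← sq_abs, ← one_div_pow]
    gcongr
  calc Real.exp (g p - 2 * (1 / (p : ℝ) ^ 2))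
      ≤ Real.exp (g p - 2 * g p ^ 2) := by gcongr
    _ ≤ 1 + g p := exp_sub_two_mul_sq_le_one_add (by linarith [neg_abs_le (g p)])

theorem exists_lt_sum (hg : IsSquarefreeMultiplicative g) (hgp : ∀ p : ℕ, p.Prime → |g p| ≤ 1)
    (hdiv : Tendsto (fun N : ℕ ↦ ∑ p ∈ N.primesBelow, g p / p) atTop atTop) (C : ℝ) :
    ∃ N : ℕ, C < ∑ n ∈ Icc 1 N, g n := by
  by_contra! hC
  have hlarge := tendsto_atTop.1 (tendsto_tsum_primes_rpow_neg_mul_atTop hgp hdiv)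
    (C + 2 * ∑' p : Nat.Primes, 1 / (p : ℝ) ^ 2)
  obtain ⟨δ, hprimes, hδ : 0 < δ⟩ := (hlarge.and self_mem_nhdsWithin).exists
  have hsum := summable_norm_rpow_neg_mul (lt_add_of_pos_right 1 hδ) (hg.abs_le_one hgp)
  have hp_le (p : ℕ) (hp : p.Prime) : |(p : ℝ) ^ (-(1 + δ)) * g p| ≤ 1 / p := by
    rw [abs_mul, abs_of_nonneg (by positivity), one_div, ← Real.rpow_neg_one]
    refine (mul_le_of_le_one_right (by positivity) (hgp p hp)).trans ?_
    exact Real.rpow_le_rpow_of_exponent_le (mod_cast hp.one_le) (by linarith)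
  have hlower := (hg.rpow_neg_mul (1 + δ)).exp_tsum_primes_le_tsum hsum hp_le
  have hupper := tsum_rpow_neg_mul_le (by positivity) hsum.of_norm hC
  have hexp : Real.exp C ≤ C :=
    (Real.exp_le_exp.2 (le_sub_iff_add_le.2 hprimes)).trans (hlower.trans hupper)
  linarith [Real.add_one_le_exp C]

end IsSquarefreeMultiplicative

theorem stmt_16_general (f : ℕ → ℝ)
    (hf1 : f 1 = 1)
    (hfmul : ∀ {m n : ℕ}, m.Coprime n → f (m * n) = f m * f n)
    (hfp : ∀ p : ℕ, p.Prime → |f p| ≤ 1)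
    (hdiv : Tendsto (fun N : ℕ ↦ ∑ p ∈ N.primesBelow, f p / p) atTop atBot) :
    ∀ C : ℝ, ∃ N : ℕ, C < ∑ n ∈ Icc 1 N, (ArithmeticFunction.moebius n : ℝ) * f n := by
  have hμf (p : ℕ) (hp : p.Prime) : (ArithmeticFunction.moebius p : ℝ) * f p = -f p := by
    simp [ArithmeticFunction.moebius_apply_prime hp]
  refine (IsSquarefreeMultiplicative.moebius_mul hf1 hfmul).exists_lt_sum
    (fun p hp ↦ by simpa only [hμf p hp, abs_neg] using hfp p hp)
    ((tendsto_neg_atBot_atTop.comp hdiv).congr fun N ↦ ?_)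
  rw [Function.comp_apply, ← sum_neg_distrib]
  exact sum_congr rfl fun p hp ↦ by rw [hμf p (Nat.prime_of_mem_primesBelow hp), neg_div]

/-- If `f` is completely multiplicative with values in `{-1, 1}` and
`∑_{p ≤ x} f p / p → -∞`, then the partial sums of `μ·f` are unbounded. -/
theorem stmt_16 (f : ℕ → ℤ)
    (hf1 : f 1 = 1)
    (hfmul : ∀ a b : ℕ, f (a * b) = f a * f b)
    (hfpm : ∀ n : ℕ, 1 ≤ n → f n = 1 ∨ f n = -1)
    (hdiv : Filter.Tendsto (fun N : ℕ => ∑ p ∈ N.primesBelow, (f p : ℝ) / p)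
      Filter.atTop Filter.atBot) :
    ∀ C : ℝ, ∃ N : ℕ,
      C < |((∑ n ∈ Finset.Icc 1 N, ArithmeticFunction.moebius n * f n : ℤ) : ℝ)| := by
  intro C
  obtain ⟨N, hN⟩ := stmt_16_general (fun n ↦ f n) (by simp [hf1]) (by simp [hfmul])
    (fun p hp ↦ by rcases hfpm p hp.one_le with h | h <;> simp [h]) hdiv C
  exact ⟨N, hN.trans_le (by push_cast; exact le_abs_self _)⟩
end

section
/- Let f : ℕ → ℤ be a completely multiplicative function taking values in {-1, 1}, and let σ be a real number with 1/2 < σ ≤ 1. If ∑_{p ≤ x} f(p)/p^σ → ∞ as x → ∞ (the sum over primes p), then the partial sums of f are unbounded: lim sup_{N→∞} |∑_{n=1}^{N} f(n)| = ∞. -/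
/-!
Suppose that the partial sums of `f` are `O(n ^ r)` with `r < σ`. Partial summation writes
`F s = ∑ f n / n ^ s` as `s` times a Mellin transform of the summatory function of `f`, which
continues `F` analytically to `re s > r`. By the Euler product `F = exp (P + R)`, where
`P s = ∑ f p / p ^ s` runs over the primes and `R`, the contribution of higher prime powers, is
analytic on `re s > 1/2`. So `exp (∑ a n / n ^ s)`, where `a` is supported on the primes and
`a p = f p / p ^ σ`, continues analytically from large `s` to all real `s ≥ 0`.

The partial sums `A x` of `re (a n)` are bounded below, because they tend to `∞`. Hence
`re ∑ a n / n ^ s` is, up to an additive constant, `s ∫ (A x + K) x ^ (-s - 1) dx` over `x > 1`,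
with a nonnegative integrand. Landau's argument shows that this integral converges as far as the
continuation reaches: since the continuation is bounded below by a positive constant, its
logarithm is analytic too. The integral therefore converges for all `s > 0`, and
as `s → 0` its product with `s` tends to `∞` together with `A`, whereas the continuation is
bounded near `0`.
-/

open Filter MeasureTheory ProbabilityTheory Set Topology Asymptotics
open scoped ENNReal Nat

section Landau

lemma exists_forall_hasFPowerSeriesOnBall_of_analyticAt {𝕜 E F : Type*}
    [NontriviallyNormedField 𝕜] [NormedAddCommGroup E] [NormedSpace 𝕜 E] [NormedAddCommGroup F]
    [NormedSpace 𝕜 F] [CompleteSpace F] {f : E → F} {x : E} (hf : AnalyticAt 𝕜 f x) :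
    ∃ r > 0, ∀ y ∈ Metric.eball x r,
      ∃ p : FormalMultilinearSeries 𝕜 E F, HasFPowerSeriesOnBall f p y r := by
  obtain ⟨p, r, hp⟩ := hf
  have half_pos : 0 < r / 2 := ENNReal.half_pos hp.r_pos.ne'
  refine ⟨r / 2, half_pos, fun y hy ↦ ⟨p.changeOrigin (y - x), ?_⟩⟩
  have dist_lt : (‖y - x‖₊ : ℝ≥0∞) < r / 2 := by
    rwa [Metric.mem_eball, edist_eq_enorm_sub] at hy
  have hball := hp.changeOrigin (dist_lt.trans_le ENNReal.half_le_self)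
  rw [add_sub_cancel] at hball
  refine hball.mono half_pos (ENNReal.le_sub_of_add_le_right ENNReal.coe_ne_top ?_)
  calc r / 2 + ‖y - x‖₊ ≤ r / 2 + r / 2 := by gcongr
    _ = r := ENNReal.add_halves r

lemma integrable_of_hasSum_of_summable_integral_norm {Ω E : Type*} [MeasurableSpace Ω]
    [NormedAddCommGroup E] {μ : Measure Ω} {F : ℕ → Ω → E} {f : Ω → E}
    (hF : ∀ n, Integrable (F n) μ) (hsum : Summable fun n ↦ ∫ ω, ‖F n ω‖ ∂μ)
    (hf : ∀ᵐ ω ∂μ, HasSum (F · ω) (f ω)) : Integrable f μ := by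
  have hmeas : AEStronglyMeasurable f μ := by
    refine aestronglyMeasurable_of_tendsto_ae atTop
      (f := fun n ω ↦ ∑ k ∈ Finset.range n, F k ω) (fun n ↦ ?_) ?_
    · exact Finset.aestronglyMeasurable_fun_sum _ fun k _ ↦ (hF k).1
    · filter_upwards [hf] with ω hω using hω.tendsto_sum_nat
  refine ⟨hmeas, ?_⟩
  calc ∫⁻ ω, ‖f ω‖ₑ ∂μ
      ≤ ∫⁻ ω, ∑' n, ‖F n ω‖ₑ ∂μ := by
        refine lintegral_mono_ae ?_
        filter_upwards [hf] with ω hω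
        rw [← hω.tsum_eq]
        exact enorm_tsum_le_tsum_enorm
    _ = ∑' n, ∫⁻ ω, ‖F n ω‖ₑ ∂μ := lintegral_tsum fun n ↦ (hF n).1.enorm
    _ = ∑' n, ENNReal.ofReal (∫ ω, ‖F n ω‖ ∂μ) := by
        simp_rw [ofReal_integral_norm_eq_lintegral_enorm (hF _)]
    _ < ∞ := hsum.tsum_ofReal_lt_top

variable {Ω : Type*} [MeasurableSpace Ω] {μ : Measure Ω} {X : Ω → ℝ}

lemma mem_interior_integrableExpSet_of_Iio_subset {b u : ℝ} (h : Iio b ⊆ integrableExpSet X μ)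
    (hu : u < b) : u ∈ interior (integrableExpSet X μ) :=
  interior_maximal h isOpen_Iio hu

lemma isLowerSet_integrableExpSet (hX : 0 ≤ᵐ[μ] X) (hXm : AEMeasurable X μ) :
    IsLowerSet (integrableExpSet X μ) := by
  intro v u huv hv
  refine Integrable.mono hv (by fun_prop) ?_
  filter_upwards [hX] with ω hω
  rw [Real.norm_of_nonneg (by positivity), Real.norm_of_nonneg (by positivity)]
  have : 0 ≤ X ω := hω
  gcongr

lemma add_mem_integrableExpSet_of_summable (hX : 0 ≤ᵐ[μ] X) {u t : ℝ}
    (hu : u ∈ interior (integrableExpSet X μ)) (ht : 0 ≤ t)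
    (hsum : Summable fun n : ℕ ↦ (∫ ω, X ω ^ n * Real.exp (u * X ω) ∂μ) / n ! * t ^ n) :
    u + t ∈ integrableExpSet X μ := by
  refine integrable_of_hasSum_of_summable_integral_norm
    (F := fun n ω ↦ X ω ^ n * Real.exp (u * X ω) * (t ^ n / n !))
    (fun n ↦ (integrable_pow_mul_exp_of_mem_interior_integrableExpSet hu n).mul_const _) ?_ ?_
  · refine hsum.congr fun n ↦ ?_
    rw [div_mul_eq_mul_div, mul_div_assoc, ← integral_mul_const]
    refine integral_congr_ae ?_
    filter_upwards [hX] with ω hω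
    have : 0 ≤ X ω := hω
    rw [Real.norm_of_nonneg (by positivity)]
  · refine ae_of_all _ fun ω ↦ ?_
    have hexp := (NormedSpace.expSeries_div_hasSum_exp (t * X ω)).mul_left (Real.exp (u * X ω))
    rw [← Real.exp_eq_exp_ℝ, ← Real.exp_add, ← add_mul] at hexp
    exact hexp.congr_fun fun n ↦ by ring

/-- Landau's argument: the Taylor series of the moment generating function at a point slightly to
the left of `b` has nonnegative terms to the right of that point and converges beyond `b`, where it
may be interchanged with the integral. -/
theorem exists_gt_mem_integrableExpSet_of_analyticAt (hX : 0 ≤ᵐ[μ] X) {b : ℝ}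
    (hI : Iio b ⊆ integrableExpSet X μ) {h : ℝ → ℝ} (hh : AnalyticAt ℝ h b)
    (heq : EqOn h (mgf X μ) (Iio b)) : ∃ v ∈ integrableExpSet X μ, b < v := by
  obtain ⟨r, hr, hball⟩ := exists_forall_hasFPowerSeriesOnBall_of_analyticAt hh
  obtain ⟨δ, hδ, hδr⟩ : ∃ δ : ℝ, 0 < δ ∧ ENNReal.ofReal (2 * δ) < r := by
    obtain ⟨ε, -, hε, hεr⟩ := ENNReal.lt_iff_exists_real_btwn.mp hr
    exact ⟨ε / 2, half_pos (ENNReal.ofReal_pos.mp hε), by rwa [mul_div_cancel₀ _ two_ne_zero]⟩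
  have hu : b - δ < b := sub_lt_self b hδ
  have hu_int := mem_interior_integrableExpSet_of_Iio_subset hI hu
  obtain ⟨p, hp⟩ := hball (b - δ) (by
    rw [Metric.mem_eball, edist_dist, Real.dist_eq, sub_sub_cancel_left, abs_neg, abs_of_pos hδ]
    exact lt_of_le_of_lt (by gcongr; linarith) hδr)
  have htaylor := hp.hasFPowerSeriesAt.eq_formalMultilinearSeries_of_eventually
    (hasFPowerSeriesAt_mgf hu_int) (heq.eventuallyEq_of_mem (Iio_mem_nhds hu))
  have hsum := hp.hasSum (y := 2 * δ) (by
    rwa [Metric.mem_eball, edist_zero_right, Real.enorm_eq_ofReal (by positivity)]) |>.summable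
  simp only [htaylor, FormalMultilinearSeries.ofScalars_apply_eq, smul_eq_mul] at hsum
  exact ⟨b - δ + 2 * δ, add_mem_integrableExpSet_of_summable hX hu_int (by positivity) hsum,
    by linarith⟩

lemma Iio_subset_of_isLowerSet_of_exists_gt {I : Set ℝ} (hI : IsLowerSet I) (hne : I.Nonempty)
    {a : ℝ} (h : ∀ b < a, Iio b ⊆ I → ∃ v ∈ I, b < v) : Iio a ⊆ I := by
  intro u hua
  by_contra hu
  have hub : u ∈ upperBounds I := fun v hv ↦ not_lt.mp fun huv ↦ hu (hI huv.le hv)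
  obtain ⟨v, hv, hlt⟩ := h (sSup I) ((csSup_le hne hub).trans_lt hua) fun w hw ↦ by
    obtain ⟨v, hv, hwv⟩ := exists_lt_of_lt_csSup hne hw
    exact hI hwv.le hv
  exact hlt.not_ge (le_csSup ⟨u, hub⟩ hv)

variable {a c : ℝ} {w g : ℝ → ℝ}

lemma eqOn_exp_mul_mgf_of_eqOn_Iio (hw : AnalyticOnNhd ℝ w (Iio a))
    (hg : AnalyticOnNhd ℝ g (Iio a)) (heq : EqOn g (fun u ↦ Real.exp (w u * mgf X μ u)) (Iio c))
    (hI : Iio a ⊆ integrableExpSet X μ) :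
    EqOn g (fun u ↦ Real.exp (w u * mgf X μ u)) (Iio a) := by
  have hexp : AnalyticOnNhd ℝ (fun u ↦ Real.exp (w u * mgf X μ u)) (Iio a) := fun u hu ↦
    ((hw u hu).fun_mul
      (analyticAt_mgf (mem_interior_integrableExpSet_of_Iio_subset hI hu))).rexp
  obtain ⟨z, hz⟩ := exists_lt (min a c)
  exact hg.eqOn_of_preconnected_of_eventuallyEq hexp isPreconnected_Iio
    (hz.trans_le (min_le_left a c))
    (heq.eventuallyEq_of_mem (Iio_mem_nhds (hz.trans_le (min_le_right a c))))

lemma exists_gt_mem_integrableExpSet_of_eqOn_exp (hX : 0 ≤ᵐ[μ] X) {b : ℝ}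
    (hI : Iio b ⊆ integrableExpSet X μ) (hw : AnalyticAt ℝ w b) (hw_pos : ∀ u ≤ b, 0 < w u)
    (hg : AnalyticAt ℝ g b) (heq : EqOn g (fun u ↦ Real.exp (w u * mgf X μ u)) (Iio b)) :
    ∃ v ∈ integrableExpSet X μ, b < v := by
  have one_le : 1 ≤ g b := by
    refine ge_of_tendsto (hg.continuousAt.tendsto.mono_left (nhdsWithin_le_nhds (s := Iio b))) ?_
    filter_upwards [self_mem_nhdsWithin] with u hu
    rw [heq hu]
    exact Real.one_le_exp (mul_nonneg (hw_pos u (mem_Iio.mp hu).le).le mgf_nonneg)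
  refine exists_gt_mem_integrableExpSet_of_analyticAt hX hI
    ((hg.log (zero_lt_one.trans_le one_le)).div hw (hw_pos b le_rfl).ne') fun u hu ↦ ?_
  rw [Pi.div_apply, heq hu, Real.log_exp, mul_div_cancel_left₀ _ (hw_pos u (mem_Iio.mp hu).le).ne']

theorem Iio_subset_integrableExpSet_of_eqOn_exp (hX : 0 ≤ᵐ[μ] X) (hXm : AEMeasurable X μ)
    (hw : AnalyticOnNhd ℝ w (Iio a)) (hw_pos : ∀ u < a, 0 < w u)
    (hg : AnalyticOnNhd ℝ g (Iio a)) (hc : Iio c ⊆ integrableExpSet X μ)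
    (heq : EqOn g (fun u ↦ Real.exp (w u * mgf X μ u)) (Iio c)) :
    Iio a ⊆ integrableExpSet X μ :=
  Iio_subset_of_isLowerSet_of_exists_gt (isLowerSet_integrableExpSet hX hXm)
    (nonempty_Iio.mono hc) fun b hb hI ↦
    exists_gt_mem_integrableExpSet_of_eqOn_exp hX hI (hw b hb)
      (fun u hu ↦ hw_pos u (hu.trans_lt hb)) (hg b hb)
      (eqOn_exp_mul_mgf_of_eqOn_Iio (hw.mono (Iio_subset_Iio hb.le))
        (hg.mono (Iio_subset_Iio hb.le)) heq hI)

end Landau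

section MellinMeasure

/-- The measure `B x / x dx` on `(1, ∞)`. Under it `Real.log` has moment generating function
`u ↦ ∫ x > 1, B x * x ^ (u - 1)`, the Mellin transform of the restriction of `B` to `(1, ∞)`.
Negative values of `B` are truncated to `0`. -/
noncomputable def mellinMeasure (B : ℝ → ℝ) : Measure ℝ :=
  (volume.restrict (Ioi 1)).withDensity fun x ↦ ENNReal.ofReal (B x / x)

variable {B : ℝ → ℝ}

lemma log_nonneg_ae_mellinMeasure : 0 ≤ᵐ[mellinMeasure B] Real.log := by
  refine (withDensity_absolutelyContinuous _ _).ae_le ?_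
  filter_upwards [ae_restrict_mem measurableSet_Ioi] with x hx
  exact Real.log_nonneg (mem_Ioi.mp hx).le

lemma ofReal_toReal_smul_exp_mul_log (hB : ∀ x > 1, 0 ≤ B x) {x : ℝ} (hx : 1 < x) (u : ℝ) :
    (ENNReal.ofReal (B x / x)).toReal • Real.exp (u * Real.log x) = B x * x ^ (u - 1) := by
  have hx0 : 0 < x := one_pos.trans hx
  rw [ENNReal.toReal_ofReal (div_nonneg (hB x hx) hx0.le), smul_eq_mul, mul_comm u,
    ← Real.rpow_def_of_pos hx0, Real.rpow_sub_one hx0.ne', div_mul_eq_mul_div, mul_div_assoc]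

lemma mem_integrableExpSet_log_mellinMeasure (hBm : Measurable B) (hB : ∀ x > 1, 0 ≤ B x)
    {u : ℝ} : u ∈ integrableExpSet Real.log (mellinMeasure B) ↔
      IntegrableOn (fun x ↦ B x * x ^ (u - 1)) (Ioi 1) := by
  rw [integrableExpSet, mem_ofPred_eq, mellinMeasure,
    integrable_withDensity_iff_integrable_smul' (by fun_prop)
      (ae_of_all _ fun _ ↦ ENNReal.ofReal_lt_top)]
  exact integrableOn_congr_fun (fun x hx ↦ ofReal_toReal_smul_exp_mul_log hB hx u)
    measurableSet_Ioi

lemma mgf_log_mellinMeasure (hBm : Measurable B) (hB : ∀ x > 1, 0 ≤ B x) (u : ℝ) :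
    mgf Real.log (mellinMeasure B) u = ∫ x in Ioi 1, B x * x ^ (u - 1) := by
  rw [mgf, mellinMeasure, integral_withDensity_eq_integral_toReal_smul (by fun_prop)
    (ae_of_all _ fun _ ↦ ENNReal.ofReal_lt_top)]
  exact setIntegral_congr_fun measurableSet_Ioi fun x hx ↦
    ofReal_toReal_smul_exp_mul_log hB hx u

lemma mul_rpow_le_neg_mul_integral (hB : ∀ x > 1, 0 ≤ B x) {u N M : ℝ} (hu : u < 0) (hN : 1 ≤ N)
    (hM : ∀ x > N, M ≤ B x) (hint : IntegrableOn (fun x ↦ B x * x ^ (u - 1)) (Ioi 1)) :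
    M * N ^ u ≤ -u * ∫ x in Ioi 1, B x * x ^ (u - 1) := by
  have hN0 : 0 < N := one_pos.trans_le hN
  have hsub : Ioi N ⊆ Ioi 1 := Ioi_subset_Ioi hN
  calc M * N ^ u = -u * ∫ x in Ioi N, M * x ^ (u - 1) := by
        rw [integral_const_mul, integral_Ioi_rpow_of_lt (by linarith) hN0, sub_add_cancel]
        field_simp [hu.ne]
    _ ≤ -u * ∫ x in Ioi N, B x * x ^ (u - 1) := by
        refine mul_le_mul_of_nonneg_left ?_ (neg_pos.mpr hu).le
        refine setIntegral_mono_on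
          ((integrableOn_Ioi_rpow_of_lt (by linarith) hN0).const_mul M) (hint.mono_set hsub)
          measurableSet_Ioi fun x hx ↦ ?_
        have : 0 < x := hN0.trans hx
        gcongr
        exact hM x hx
    _ ≤ -u * ∫ x in Ioi 1, B x * x ^ (u - 1) := by
        refine mul_le_mul_of_nonneg_left ?_ (neg_pos.mpr hu).le
        refine setIntegral_mono_set hint ?_ hsub.eventuallyLE
        filter_upwards [ae_restrict_mem measurableSet_Ioi] with x hx
        exact mul_nonneg (hB x hx) (Real.rpow_nonneg (one_pos.trans hx).le _)

lemma tendsto_neg_mul_integral_atTop (hB : ∀ x > 1, 0 ≤ B x) (hB_top : Tendsto B atTop atTop)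
    (hint : ∀ u < (0 : ℝ), IntegrableOn (fun x ↦ B x * x ^ (u - 1)) (Ioi 1)) :
    Tendsto (fun u : ℝ ↦ -u * ∫ x in Ioi 1, B x * x ^ (u - 1)) (𝓝[<] 0) atTop := by
  refine tendsto_atTop.mpr fun M ↦ ?_
  obtain ⟨N, hN1, hN⟩ := ((eventually_ge_atTop (1 : ℝ)).and
    (eventually_forall_ge_atTop.mpr (hB_top.eventually_ge_atTop (M + 1)))).exists
  have hlim : Tendsto (fun u : ℝ ↦ (M + 1) * N ^ u) (𝓝[<] 0) (𝓝 (M + 1)) := by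
    have hcont : Continuous fun u : ℝ ↦ (M + 1) * N ^ u :=
      (Real.continuous_const_rpow (one_pos.trans_le hN1).ne').const_mul _
    simpa only [Real.rpow_zero, mul_one] using (hcont.tendsto 0).mono_left nhdsWithin_le_nhds
  filter_upwards [hlim.eventually_const_le (lt_add_one M), self_mem_nhdsWithin] with u hM hu
  exact hM.trans
    (mul_rpow_le_neg_mul_integral hB hu hN1 (fun _ hx ↦ hN _ hx.le) (hint u hu))

theorem not_tendsto_atTop_of_eqOn_exp_mgf (hBm : Measurable B) (hB : ∀ x > 1, 0 ≤ B x)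
    {g : ℝ → ℝ} (hg : ∀ u ≤ 0, AnalyticAt ℝ g u) {c k : ℝ} (hk : 0 < k)
    (hc : Iio c ⊆ integrableExpSet Real.log (mellinMeasure B))
    (heq : EqOn g (fun u ↦ Real.exp (k * -u * mgf Real.log (mellinMeasure B) u)) (Iio c)) :
    ¬Tendsto B atTop atTop := by
  intro hB_top
  have hg' : AnalyticOnNhd ℝ g (Iio 0) := fun u hu ↦ hg u (mem_Iio.mp hu).le
  have hw : AnalyticOnNhd ℝ (fun u : ℝ ↦ k * -u) (Iio 0) := fun u _ ↦ by fun_prop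
  have hI : Iio 0 ⊆ integrableExpSet Real.log (mellinMeasure B) :=
    Iio_subset_integrableExpSet_of_eqOn_exp log_nonneg_ae_mellinMeasure
      Real.measurable_log.aemeasurable hw (fun u hu ↦ mul_pos hk (neg_pos.mpr hu)) hg' hc heq
  have hlim : Tendsto g (𝓝[<] 0) atTop := by
    have h := Real.tendsto_exp_atTop.comp ((tendsto_neg_mul_integral_atTop hB hB_top fun u hu ↦
      (mem_integrableExpSet_log_mellinMeasure hBm hB).mp (hI hu)).const_mul_atTop hk)
    refine h.congr' ?_
    filter_upwards [self_mem_nhdsWithin] with u hu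
    rw [eqOn_exp_mul_mgf_of_eqOn_Iio hw hg' heq hI hu]
    simp only [Function.comp_apply, mgf_log_mellinMeasure hBm hB, mul_assoc]
  exact not_tendsto_nhds_of_tendsto_atTop hlim _
    ((hg 0 le_rfl).continuousAt.tendsto.mono_left nhdsWithin_le_nhds)

end MellinMeasure

section Summatory

/-- The summatory function `x ↦ ∑_{1 ≤ k ≤ x} a k` of a sequence, whose Mellin transform
continues the L-series of `a`. -/
noncomputable def summatory (a : ℕ → ℂ) (x : ℝ) : ℂ :=
  ∑ k ∈ Finset.Icc 1 ⌊x⌋₊, a k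

variable {a : ℕ → ℂ} {r : ℝ}

lemma measurable_summatory (a : ℕ → ℂ) : Measurable (summatory a) :=
  (measurable_from_nat (f := fun n ↦ ∑ k ∈ Finset.Icc 1 n, a k)).comp Nat.measurable_floor

lemma summatory_of_lt_one (a : ℕ → ℂ) {x : ℝ} (hx : x < 1) : summatory a x = 0 := by
  rw [summatory, Nat.floor_eq_zero.mpr hx, Finset.Icc_eq_empty (by norm_num), Finset.sum_empty]

lemma locallyIntegrableOn_summatory (a : ℕ → ℂ) : LocallyIntegrableOn (summatory a) (Ioi 0) := by
  have h := locallyIntegrableOn_mul_sum_Icc a (m := 1) le_rfl (locallyIntegrableOn_const (1 : ℂ))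
  simp only [one_mul] at h
  exact h.mono_set Ioi_subset_Ici_self

lemma summatory_isBigO_nhdsGT_zero (a : ℕ → ℂ) (b : ℝ) :
    summatory a =O[𝓝[>] 0] fun x ↦ x ^ (-b) := by
  refine (isBigO_zero _ _).congr' ?_ EventuallyEq.rfl
  filter_upwards [nhdsWithin_le_nhds (Iio_mem_nhds one_pos)] with x hx
  exact (summatory_of_lt_one a hx).symm

lemma mellinConvergent_summatory (hO : summatory a =O[atTop] (· ^ r)) {s : ℂ} (hs : s.re < -r) :
    MellinConvergent (summatory a) s :=
  mellinConvergent_of_isBigO_rpow (locallyIntegrableOn_summatory a)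
    (by simpa only [neg_neg] using hO) hs
    (summatory_isBigO_nhdsGT_zero a (s.re - 1)) (sub_one_lt s.re)

lemma analyticAt_mellin_summatory (hO : summatory a =O[atTop] (· ^ r)) {s : ℂ}
    (hs : s.re < -r) : AnalyticAt ℂ (mellin (summatory a)) s := by
  have hd : DifferentiableOn ℂ (mellin (summatory a)) {s | s.re < -r} := fun s hs ↦
    (mellin_differentiableAt_of_isBigO_rpow (locallyIntegrableOn_summatory a)
      (by simpa only [neg_neg] using hO) hs (summatory_isBigO_nhdsGT_zero a (s.re - 1))
      (sub_one_lt s.re)).differentiableWithinAt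
  exact hd.analyticAt ((isOpen_lt Complex.continuous_re continuous_const).mem_nhds hs)

lemma mellin_summatory (a : ℕ → ℂ) (s : ℂ) :
    mellin (summatory a) s = ∫ x in Ioi (1 : ℝ), summatory a x * (x : ℂ) ^ (s - 1) := by
  rw [mellin, ← integral_Ici_eq_integral_Ioi (x := 1)]
  simp_rw [smul_eq_mul, mul_comm]
  refine setIntegral_eq_of_subset_of_forall_sdiff_eq_zero measurableSet_Ioi
    (Ici_subset_Ioi.mpr one_pos) fun x hx ↦ ?_
  rw [summatory_of_lt_one a (not_le.mp hx.2), zero_mul]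

theorem LSeries_eq_mul_mellin_summatory (hr : 0 ≤ r) (hO : summatory a =O[atTop] (· ^ r)) {s : ℂ}
    (hs : r < s.re) (hS : LSeriesSummable a s) :
    LSeries a s = s * mellin (summatory a) (-s) := by
  have hO_nat : (fun n : ℕ ↦ ∑ k ∈ Finset.Icc 1 n, a k) =O[atTop] fun n ↦ (n : ℝ) ^ r := by
    simpa only [Function.comp_def, summatory, Nat.floor_natCast] using
      hO.comp_tendsto tendsto_natCast_atTop_atTop
  rw [LSeries_eq_mul_integral a hr hs hS hO_nat, mellin_summatory, neg_add']
  rfl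

lemma summatory_mul_cpow_re (a : ℕ → ℂ) {x : ℝ} (hx : 0 ≤ x) (u : ℝ) :
    (summatory a x * (x : ℂ) ^ ((u : ℂ) - 1)).re = (summatory a x).re * x ^ (u - 1) := by
  rw [← Complex.ofReal_one, ← Complex.ofReal_sub, ← Complex.ofReal_cpow hx, Complex.re_mul_ofReal]

lemma integrableOn_re_summatory_mul_rpow (hO : summatory a =O[atTop] (· ^ r)) {u : ℝ}
    (hu : u < -r) : IntegrableOn (fun x ↦ (summatory a x).re * x ^ (u - 1)) (Ioi 1) := by
  have h := (mellinConvergent_summatory hO (s := u) hu).mono_set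
    (Ioi_subset_Ioi one_pos.le)
  refine (integrableOn_congr_fun (fun x hx ↦ ?_) measurableSet_Ioi).mp h.re
  rw [smul_eq_mul, mul_comm]
  exact summatory_mul_cpow_re a (one_pos.trans hx).le u

lemma re_mellin_summatory (hO : summatory a =O[atTop] (· ^ r)) {u : ℝ} (hu : u < -r) :
    (mellin (summatory a) u).re = ∫ x in Ioi 1, (summatory a x).re * x ^ (u - 1) := by
  have h := (mellinConvergent_summatory hO (s := u) hu).mono_set
    (Ioi_subset_Ioi one_pos.le)
  simp_rw [smul_eq_mul, mul_comm] at h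
  rw [mellin_summatory, ← RCLike.re_eq_complex_re, ← integral_re h]
  exact setIntegral_congr_fun measurableSet_Ioi fun x hx ↦
    summatory_mul_cpow_re a (one_pos.trans hx).le u

lemma summatory_isBigO_atTop (hr : 0 ≤ r)
    (hO : (fun n : ℕ ↦ ∑ k ∈ Finset.Icc 1 n, a k) =O[atTop] fun n ↦ (n : ℝ) ^ r) :
    summatory a =O[atTop] (· ^ r) :=
  (hO.comp_tendsto tendsto_nat_floor_atTop).trans
    (isEquivalent_nat_floor.isBigO.rpow hr (eventually_ge_atTop 0))

end Summatory

section Continuation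

lemma analyticAt_sq_norm_ofReal {e : ℂ → ℂ} {x : ℝ} (he : AnalyticAt ℂ e x) :
    AnalyticAt ℝ (fun y : ℝ ↦ ‖e y‖ ^ 2) x := by
  simp_rw [Complex.sq_norm, Complex.normSq_apply]
  exact (he.re_ofReal.fun_mul he.re_ofReal).fun_add (he.im_ofReal.fun_mul he.im_ofReal)

variable {a : ℕ → ℂ} {r K : ℝ}

lemma measurable_re_summatory_add (a : ℕ → ℂ) (K : ℝ) :
    Measurable fun x ↦ (summatory a x).re + K :=
  (Complex.measurable_re.comp (measurable_summatory a)).add_const K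

lemma exists_forall_nonneg_re_summatory_add
    (h : Tendsto (fun x ↦ (summatory a x).re) atTop atTop) :
    ∃ K, ∀ x, 0 ≤ (summatory a x).re + K := by
  have h_nat := h.comp (tendsto_natCast_atTop_atTop (R := ℝ))
  rw [← Nat.cofinite_eq_atTop] at h_nat
  obtain ⟨m, hm⟩ := h_nat.exists_forall_le
  refine ⟨-(summatory a m).re, fun x ↦ ?_⟩
  have := hm ⌊x⌋₊
  simp only [Function.comp_apply, summatory, Nat.floor_natCast] at this ⊢
  linarith

lemma integrableOn_re_summatory_add_mul_rpow (hr : 0 ≤ r) (hO : summatory a =O[atTop] (· ^ r))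
    (K : ℝ) {u : ℝ} (hu : u < -r) :
    IntegrableOn (fun x ↦ ((summatory a x).re + K) * x ^ (u - 1)) (Ioi 1) := by
  simp_rw [add_mul]
  exact (integrableOn_re_summatory_mul_rpow hO hu).add
    ((integrableOn_Ioi_rpow_of_lt (by linarith) one_pos).const_mul K)

lemma re_LSeries_neg_ofReal (hr : 0 ≤ r) (hO : summatory a =O[atTop] (· ^ r)) (K : ℝ) {u : ℝ}
    (hu : u < -r) (hS : LSeriesSummable a (-u : ℝ)) :
    (LSeries a (-u : ℝ)).re =
      -u * (∫ x in Ioi 1, ((summatory a x).re + K) * x ^ (u - 1)) - K := by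
  have hu0 : u < 0 := by linarith
  have integral_rpow : ∫ x in Ioi (1 : ℝ), x ^ (u - 1) = -u⁻¹ := by
    rw [integral_Ioi_rpow_of_lt (by linarith) one_pos, sub_add_cancel, Real.one_rpow, neg_div,
      one_div]
  rw [LSeries_eq_mul_mellin_summatory hr hO (by rw [Complex.ofReal_re]; linarith) hS,
    Complex.re_ofReal_mul, Complex.ofReal_neg, neg_neg, re_mellin_summatory hO hu]
  simp_rw [add_mul]
  rw [integral_add (integrableOn_re_summatory_mul_rpow hO hu)
      ((integrableOn_Ioi_rpow_of_lt (by linarith) one_pos).const_mul K),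
    integral_const_mul, integral_rpow]
  field_simp [hu0.ne]
  ring

lemma sq_norm_mul_exp_eq_exp_mgf (hr : 0 ≤ r) (hO : summatory a =O[atTop] (· ^ r))
    (hK : ∀ x, 0 ≤ (summatory a x).re + K) {u : ℝ} (hu : u < -r)
    (hS : LSeriesSummable a (-u : ℝ)) {z : ℂ} (hz : ‖z‖ = Real.exp (LSeries a (-u : ℝ)).re) :
    ‖z‖ ^ 2 * Real.exp (2 * K) = Real.exp
      (2 * -u * mgf Real.log (mellinMeasure fun x ↦ (summatory a x).re + K) u) := by
  rw [mgf_log_mellinMeasure (measurable_re_summatory_add a K) fun x _ ↦ hK x, hz,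
    re_LSeries_neg_ofReal hr hO K hu hS, ← Real.exp_nat_mul, ← Real.exp_add]
  congr 1
  push_cast
  ring

theorem not_tendsto_re_summatory_atTop (hr : 0 ≤ r) (hO : summatory a =O[atTop] (· ^ r))
    (hS : ∀ s : ℝ, r < s → LSeriesSummable a s) {H : ℂ → ℂ}
    (hH : ∀ s : ℝ, 0 ≤ s → AnalyticAt ℂ H s)
    (hexp : ∀ s : ℝ, r < s → ‖H s‖ = Real.exp (LSeries a s).re) :
    ¬Tendsto (fun x ↦ (summatory a x).re) atTop atTop := by
  intro h_top
  obtain ⟨K, hK⟩ := exists_forall_nonneg_re_summatory_add h_top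
  have hBm := measurable_re_summatory_add a K
  have hg : ∀ u ≤ 0, AnalyticAt ℝ (fun u ↦ ‖H (-u : ℝ)‖ ^ 2 * Real.exp (2 * K)) u := fun u hu ↦
    (AnalyticAt.fun_comp (f := fun u ↦ -u) (analyticAt_sq_norm_ofReal (hH _ (neg_nonneg.mpr hu)))
      (by fun_prop)).fun_mul analyticAt_const
  refine not_tendsto_atTop_of_eqOn_exp_mgf (c := -r) hBm (fun x _ ↦ hK x) hg two_pos ?_ ?_
    (tendsto_atTop_add_const_right _ K h_top)
  · exact fun u hu ↦ (mem_integrableExpSet_log_mellinMeasure hBm fun x _ ↦ hK x).mpr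
      (integrableOn_re_summatory_add_mul_rpow hr hO K hu)
  · exact fun u hu ↦ sq_norm_mul_exp_eq_exp_mgf hr hO hK hu (hS _ (lt_neg.mp hu))
      (hexp _ (lt_neg.mp hu))

end Continuation

section EulerProduct

/-- The contribution of the higher prime powers to the logarithm of the Euler product
`∏ p, (1 - f p * p ^ (-s))⁻¹`. -/
noncomputable def eulerRemainder (f : ℕ → ℂ) (s : ℂ) : ℂ :=
  ∑' p : Nat.Primes,
    (-Complex.log (1 - f p * (p : ℂ) ^ (-s)) - f p * (p : ℂ) ^ (-s))

lemma norm_neg_log_one_sub_sub_self_le {z : ℂ} {q : ℝ} (hz : ‖z‖ ≤ q) (hq : q < 1) :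
    ‖-Complex.log (1 - z) - z‖ ≤ ‖z‖ ^ 2 * ((1 - q)⁻¹ / 2) := by
  have h := Complex.norm_log_one_add_sub_self_le (z := -z) (by rw [norm_neg]; linarith)
  rw [← sub_eq_add_neg, norm_neg, sub_neg_eq_add, mul_div_assoc] at h
  rw [← neg_add', norm_neg]
  refine h.trans ?_
  have : 0 < 1 - q := sub_pos.mpr hq
  gcongr

lemma norm_mul_natCast_cpow_neg_le {z s : ℂ} (hz : ‖z‖ ≤ 1) {n : ℕ} (hn : n ≠ 0) {c : ℝ}
    (hc : c ≤ s.re) : ‖z * (n : ℂ) ^ (-s)‖ ≤ (n : ℝ) ^ (-c) := by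
  rw [norm_mul, Complex.norm_natCast_cpow_of_pos (Nat.pos_of_ne_zero hn), Complex.neg_re]
  refine (mul_le_of_le_one_left (by positivity) hz).trans ?_
  exact Real.rpow_le_rpow_of_exponent_le (mod_cast Nat.one_le_iff_ne_zero.mpr hn) (by linarith)

lemma natCast_prime_rpow_neg_le {p : ℕ} (hp : p.Prime) {c : ℝ} (hc : 0 ≤ c) :
    (p : ℝ) ^ (-c) ≤ 2 ^ (-c) :=
  Real.rpow_le_rpow_of_nonpos two_pos (mod_cast hp.two_le) (by linarith)

variable {f : ℕ → ℂ}

lemma differentiableOn_eulerRemainder (hf : ∀ p, p.Prime → ‖f p‖ ≤ 1) {c : ℝ} (hc : 1 / 2 < c) :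
    DifferentiableOn ℂ (eulerRemainder f) {s | c < s.re} := by
  have hq : (2 : ℝ) ^ (-c) < 1 :=
    Real.rpow_lt_one_of_one_lt_of_neg one_lt_two (by linarith)
  have norm_le (p : Nat.Primes) {s : ℂ} (hs : c < s.re) :
      ‖f p * (p : ℂ) ^ (-s)‖ ≤ (p : ℝ) ^ (-c) :=
    norm_mul_natCast_cpow_neg_le (hf p p.2) p.2.ne_zero hs.le
  have norm_le_two (p : Nat.Primes) {s : ℂ} (hs : c < s.re) :
      ‖f p * (p : ℂ) ^ (-s)‖ ≤ 2 ^ (-c) :=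
    (norm_le p hs).trans (natCast_prime_rpow_neg_le p.2 (by linarith))
  refine Complex.differentiableOn_tsum_of_summable_norm
    (u := fun p : Nat.Primes ↦ (p : ℝ) ^ (-(2 * c)) * ((1 - 2 ^ (-c))⁻¹ / 2))
    ((Nat.Primes.summable_rpow.mpr (by linarith)).mul_right _) (fun p s hs ↦ ?_)
    (isOpen_lt continuous_const Complex.continuous_re) fun p s hs ↦ ?_
  · have mem_slitPlane : 1 - f p * (p : ℂ) ^ (-s) ∈ Complex.slitPlane := by
      rw [sub_eq_add_neg]
      exact Complex.mem_slitPlane_of_norm_lt_one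
        (by rw [norm_neg]; exact (norm_le_two p hs).trans_lt hq)
    have hpow : DifferentiableAt ℂ (fun s : ℂ ↦ (p : ℂ) ^ (-s)) s :=
      differentiableAt_id.neg.const_cpow (.inl (mod_cast p.2.ne_zero))
    have hmul := hpow.const_mul (f p)
    exact (((hmul.const_sub 1).clog mem_slitPlane).neg.sub hmul).differentiableWithinAt
  · refine (norm_neg_log_one_sub_sub_self_le (norm_le_two p hs) hq).trans ?_
    have : 0 < 1 - (2 : ℝ) ^ (-c) := sub_pos.mpr hq
    rw [show -(2 * c) = -c * (2 : ℕ) by push_cast; ring, Real.rpow_mul_natCast (by positivity)]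
    gcongr
    exact norm_le p hs

lemma analyticAt_eulerRemainder (hf : ∀ p, p.Prime → ‖f p‖ ≤ 1) {s : ℂ} (hs : 1 / 2 < s.re) :
    AnalyticAt ℂ (eulerRemainder f) s := by
  obtain ⟨c, hc, hcs⟩ := exists_between hs
  exact (differentiableOn_eulerRemainder hf hc).analyticAt
    ((isOpen_lt continuous_const Complex.continuous_re).mem_nhds hcs)

lemma LSeries_indicator_prime (f : ℕ → ℂ) (s : ℂ) :
    LSeries ({p : ℕ | p.Prime}.indicator f) s = ∑' p : Nat.Primes, f p * (p : ℂ) ^ (-s) := by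
  refine Eq.trans ?_ (tsum_subtype {p : ℕ | p.Prime} fun n ↦ f n * (n : ℂ) ^ (-s)).symm
  refine tsum_congr fun n ↦ ?_
  by_cases hn : n.Prime
  · rw [LSeries.term_of_ne_zero hn.ne_zero, indicator_of_mem (by exact hn),
      indicator_of_mem (by exact hn), Complex.cpow_neg, div_eq_mul_inv]
  · simp [LSeries.term, hn]

theorem LSeries_eq_exp_add_eulerRemainder (f : ℕ →* ℂ) (hf : ∀ n ≠ 0, ‖f n‖ ≤ 1) {s : ℂ}
    (hs : 1 < s.re) :
    LSeries f s =
      Complex.exp (LSeries ({p : ℕ | p.Prime}.indicator f) s + eulerRemainder f s) := by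
  have hs0 : -s ≠ 0 := by
    intro h
    rw [neg_eq_zero.mp h, Complex.zero_re] at hs
    linarith
  let g : ℕ →*₀ ℂ :=
    { toFun := fun n ↦ f n * (n : ℂ) ^ (-s)
      map_zero' := by rw [Nat.cast_zero, Complex.zero_cpow hs0, mul_zero]
      map_one' := by rw [map_one, Nat.cast_one, Complex.one_cpow, one_mul]
      map_mul' := fun m n ↦ by
        rw [map_mul, Nat.cast_mul, Complex.natCast_mul_natCast_cpow, mul_mul_mul_comm] }
  have term_eq (n : ℕ) : LSeries.term f s n = g n := by
    rcases eq_or_ne n 0 with rfl | hn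
    · rw [LSeries.term_zero, map_zero]
    · rw [LSeries.term_of_ne_zero hn, div_eq_mul_inv, ← Complex.cpow_neg]
      rfl
  have hsum : Summable g :=
    (LSeriesSummable_of_bounded_of_one_lt_re hf hs).congr term_eq
  have hlog : Summable fun p : Nat.Primes ↦ -Complex.log (1 - g p) :=
    hsum.clog_one_sub.neg.subtype Nat.Prime
  have hprime : Summable fun p : Nat.Primes ↦ g p := hsum.subtype Nat.Prime
  calc LSeries f s = ∑' n, g n := tsum_congr term_eq
    _ = Complex.exp (∑' p : Nat.Primes, -Complex.log (1 - g p)) :=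
      (EulerProduct.exp_tsum_primes_log_eq_tsum hsum.norm).symm
    _ = Complex.exp (∑' p : Nat.Primes, g p +
          ∑' p : Nat.Primes, (-Complex.log (1 - g p) - g p)) := by
      rw [hlog.tsum_sub hprime, add_sub_cancel]
    _ = _ := by rw [LSeries_indicator_prime]; rfl

lemma exists_analyticAt_eq_exp_LSeries_indicator_prime (f : ℕ →* ℂ) (hf : ∀ n ≠ 0, ‖f n‖ ≤ 1)
    {r : ℝ} (hr : 0 ≤ r) (hO : summatory f =O[atTop] (· ^ r)) :
    ∃ G : ℂ → ℂ, (∀ s, max r (1 / 2) < s.re → AnalyticAt ℂ G s) ∧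
      ∀ s, max r 1 < s.re → G s = Complex.exp (LSeries ({p : ℕ | p.Prime}.indicator f) s) := by
  refine ⟨fun s ↦ s * mellin (summatory f) (-s) * Complex.exp (-eulerRemainder f s),
    fun s hs ↦ ?_, fun s hs ↦ ?_⟩
  · obtain ⟨hrs, hs_half⟩ := max_lt_iff.mp hs
    have hmellin := AnalyticAt.fun_comp (f := fun s : ℂ ↦ -s) (x := s)
      (analyticAt_mellin_summatory hO (s := -s) (neg_lt_neg hrs)) (by fun_prop)
    exact (analyticAt_id.fun_mul hmellin).fun_mul
      (analyticAt_eulerRemainder (fun p hp ↦ hf p hp.ne_zero) hs_half).fun_neg.cexp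
  · obtain ⟨hrs, hs_one⟩ := max_lt_iff.mp hs
    dsimp only
    rw [← LSeries_eq_mul_mellin_summatory hr hO hrs
      (LSeriesSummable_of_bounded_of_one_lt_re hf hs_one),
      LSeries_eq_exp_add_eulerRemainder f hf hs_one, ← Complex.exp_add, add_neg_cancel_right]

end EulerProduct

section PrimeSums

lemma LSeries_term_div_cpow (a : ℕ → ℂ) (w s : ℂ) (n : ℕ) :
    LSeries.term (fun n ↦ a n / (n : ℂ) ^ w) s n = LSeries.term a (s + w) n := by
  rcases eq_or_ne n 0 with rfl | hn
  · rfl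
  · rw [LSeries.term_of_ne_zero hn, LSeries.term_of_ne_zero hn, div_div,
      ← Complex.cpow_add _ _ (Nat.cast_ne_zero.mpr hn), add_comm]

lemma LSeries_div_cpow (a : ℕ → ℂ) (w s : ℂ) :
    LSeries (fun n ↦ a n / (n : ℂ) ^ w) s = LSeries a (s + w) :=
  tsum_congr (LSeries_term_div_cpow a w s)

lemma LSeriesSummable_div_cpow {a : ℕ → ℂ} {w s : ℂ} :
    LSeriesSummable (fun n ↦ a n / (n : ℂ) ^ w) s ↔ LSeriesSummable a (s + w) :=
  summable_congr (LSeries_term_div_cpow a w s)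

lemma summatory_isBigO_rpow_one {a : ℕ → ℂ} {m : ℝ} (ha : ∀ n ≠ 0, ‖a n‖ ≤ m) :
    summatory a =O[atTop] (· ^ (1 : ℝ)) := by
  refine IsBigO.of_bound m ((eventually_ge_atTop 0).mono fun x hx ↦ ?_)
  have hm : 0 ≤ m := (norm_nonneg _).trans (ha 1 one_ne_zero)
  rw [Real.rpow_one, Real.norm_of_nonneg hx]
  calc ‖summatory a x‖ ≤ ∑ _k ∈ Finset.Icc 1 ⌊x⌋₊, m :=
        norm_sum_le_of_le _ fun k hk ↦ ha k (Nat.one_le_iff_ne_zero.mp (Finset.mem_Icc.mp hk).1)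
    _ = m * ⌊x⌋₊ := by rw [Finset.sum_const, Nat.card_Icc, add_tsub_cancel_right, nsmul_eq_mul,
        mul_comm]
    _ ≤ m * x := mul_le_mul_of_nonneg_left (Nat.floor_le hx) hm

lemma norm_div_natCast_cpow_le {z w : ℂ} {m : ℝ} (hz : ‖z‖ ≤ m) (hw : 0 ≤ w.re) {n : ℕ}
    (hn : n ≠ 0) : ‖z / (n : ℂ) ^ w‖ ≤ m := by
  rw [norm_div, Complex.norm_natCast_cpow_of_pos (Nat.pos_of_ne_zero hn)]
  exact (div_le_self (norm_nonneg z)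
    (Real.one_le_rpow (mod_cast Nat.one_le_iff_ne_zero.mpr hn) hw)).trans hz

lemma re_summatory_indicator_prime_div_cpow (f : ℕ → ℂ) (σ x : ℝ) :
    (summatory (fun n ↦ {p : ℕ | p.Prime}.indicator f n / (n : ℂ) ^ (σ : ℂ)) x).re =
      ∑ p ∈ (⌊x⌋₊ + 1).primesBelow, (f p).re / (p : ℝ) ^ σ := by
  have filter_eq : (⌊x⌋₊ + 1).primesBelow = (Finset.Icc 1 ⌊x⌋₊).filter Nat.Prime := by
    ext p
    simp only [Nat.mem_primesBelow, Finset.mem_filter, Finset.mem_Icc, Nat.lt_succ_iff]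
    exact ⟨fun h ↦ ⟨⟨h.2.one_le, h.1⟩, h.2⟩, fun h ↦ ⟨h.1.2, h.2⟩⟩
  rw [summatory, Complex.re_sum, filter_eq, Finset.sum_filter]
  refine Finset.sum_congr rfl fun n _ ↦ ?_
  split_ifs with hn
  · rw [indicator_of_mem (by exact hn), ← Complex.ofReal_natCast,
      ← Complex.ofReal_cpow n.cast_nonneg, Complex.div_ofReal_re]
  · rw [indicator_of_notMem (by exact hn), zero_div, Complex.zero_re]

lemma not_tendsto_sum_primesBelow_of_isBigO (f : ℕ →* ℂ) (hf : ∀ n ≠ 0, ‖f n‖ ≤ 1) {r σ : ℝ}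
    (hr : 0 ≤ r) (hrσ : r < σ) (hσ : 1 / 2 < σ) (hO : summatory f =O[atTop] (· ^ r)) :
    ¬Tendsto (fun N : ℕ ↦ ∑ p ∈ N.primesBelow, (f p).re / (p : ℝ) ^ σ) atTop atTop := by
  intro hdiv
  obtain ⟨G, hG, hG_exp⟩ := exists_analyticAt_eq_exp_LSeries_indicator_prime f hf hr hO
  have indicator_le (n : ℕ) (hn : n ≠ 0) : ‖{p : ℕ | p.Prime}.indicator f n‖ ≤ 1 :=
    (norm_indicator_le_norm_self f n).trans (hf n hn)
  have h_top : Tendsto (fun x ↦ (summatory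
      (fun n ↦ {p : ℕ | p.Prime}.indicator f n / (n : ℂ) ^ (σ : ℂ)) x).re) atTop atTop := by
    simp_rw [re_summatory_indicator_prime_div_cpow]
    exact (hdiv.comp (tendsto_add_atTop_nat 1)).comp tendsto_nat_floor_atTop
  refine not_tendsto_re_summatory_atTop (H := fun s ↦ G (s + σ)) zero_le_one
    (summatory_isBigO_rpow_one fun n hn ↦
      norm_div_natCast_cpow_le (indicator_le n hn) (by rw [Complex.ofReal_re]; linarith) hn)
    (fun s hs ↦ LSeriesSummable_div_cpow.mpr
      (LSeriesSummable_of_bounded_of_one_lt_re indicator_le ?_)) (fun s hs ↦ ?_)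
    (fun s hs ↦ ?_) h_top
  · rw [← Complex.ofReal_add, Complex.ofReal_re]
    linarith
  · refine AnalyticAt.fun_comp (f := fun s : ℂ ↦ s + σ) (hG _ ?_) (by fun_prop)
    rw [← Complex.ofReal_add, Complex.ofReal_re]
    exact max_lt (by linarith) (by linarith)
  · rw [LSeries_div_cpow, hG_exp, Complex.norm_exp]
    rw [← Complex.ofReal_add, Complex.ofReal_re]
    exact max_lt (by linarith) (by linarith)

theorem stmt_17_general (f : ℕ →* ℂ) (hf : ∀ n ≠ 0, ‖f n‖ ≤ 1) {r σ : ℝ} (hrσ : r < σ)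
    (hσ : 1 / 2 < σ)
    (hdiv : Tendsto (fun N : ℕ ↦ ∑ p ∈ N.primesBelow, (f p).re / (p : ℝ) ^ σ) atTop atTop) :
    ¬(fun n : ℕ ↦ ∑ k ∈ Finset.Icc 1 n, f k) =O[atTop] fun n ↦ (n : ℝ) ^ r := by
  intro hO
  have rpow_isBigO : (fun n : ℕ ↦ (n : ℝ) ^ r) =O[atTop] fun n ↦ (n : ℝ) ^ max r 0 := by
    refine IsBigO.of_norm_eventuallyLE ((eventually_ge_atTop 1).mono fun n hn ↦ ?_)
    beta_reduce
    rw [Real.norm_of_nonneg (by positivity)]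
    exact Real.rpow_le_rpow_of_exponent_le (mod_cast hn) (le_max_left r 0)
  exact not_tendsto_sum_primesBelow_of_isBigO f hf (le_max_right r 0)
    (max_lt hrσ (by linarith)) hσ
    (summatory_isBigO_atTop (le_max_right r 0) (hO.trans rpow_isBigO)) hdiv

end PrimeSums

lemma exists_lt_norm_of_not_isBigO_rpow_zero {E : Type*} [Norm E] {u : ℕ → E}
    (hu : ¬u =O[atTop] fun n ↦ (n : ℝ) ^ (0 : ℝ)) (C : ℝ) : ∃ n, C < ‖u n‖ := by
  by_contra! h
  refine hu (IsBigO.of_bound C (Eventually.of_forall fun n ↦ ?_))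
  rw [Real.rpow_zero, norm_one, mul_one]
  exact h n

/-- If `f` is completely multiplicative with values in `{-1, 1}`, `1/2 < σ ≤ 1`, and
`∑_{p ≤ x} f p / p^σ → ∞`, then the partial sums of `f` are unbounded. -/
theorem stmt_17 (f : ℕ → ℤ)
    (hf1 : f 1 = 1)
    (hfmul : ∀ a b : ℕ, f (a * b) = f a * f b)
    (hfpm : ∀ n : ℕ, 1 ≤ n → f n = 1 ∨ f n = -1)
    (σ : ℝ) (hσ : σ ∈ Set.Ioc (1 / 2 : ℝ) 1)
    (hdiv : Filter.Tendsto (fun N : ℕ => ∑ p ∈ N.primesBelow, (f p : ℝ) / (p : ℝ) ^ σ)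
      Filter.atTop Filter.atTop) :
    ∀ C : ℝ, ∃ N : ℕ, C < |((∑ n ∈ Finset.Icc 1 N, f n : ℤ) : ℝ)| := by
  intro C
  let F : ℕ →* ℂ := (Int.castRingHom ℂ : ℤ →* ℂ).comp ⟨⟨f, hf1⟩, hfmul⟩
  have norm_le (n : ℕ) (hn : n ≠ 0) : ‖F n‖ ≤ 1 := by
    rcases hfpm n (Nat.one_le_iff_ne_zero.mpr hn) with h | h <;> simp [F, h]
  obtain ⟨N, hN⟩ := exists_lt_norm_of_not_isBigO_rpow_zero
    (stmt_17_general F norm_le (by linarith [hσ.1]) hσ.1 hdiv) C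
  refine ⟨N, hN.trans_eq ?_⟩
  rw [← Complex.norm_intCast, Int.cast_sum]
  rfl
end
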